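/- Let X be a tree and p ∈ O(X) ∪ E(X) (an ordinary point or an end point of X). Then (X,p) has unique hyperspace C(p,X) in the class 𝒯 of trees; that is, for every tree Y and q ∈ Y such that C(p,X) is homeomorphic to C(q,Y), there is a homeomorphism 𝔥 : X → Y with 𝔥(p) = q. -/

import Mathlib

open Set Topology TopologicalSpace

universe u

/-- `IndDimLE m α t` means that the small inductive dimension of `α` is at most `m - 1`.
In particular `IndDimLE 0 α t` means `α` is empty (dimension `-1`). -/
def IndDimLE : ℕ → (α : Type u) → TopologicalSpace α → Prop
  | 0, α, _ => IsEmpty α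
  | n + 1, α, t =>
      ∀ (x : α) (U : Set α), @IsOpen α t U → x ∈ U →
        ∃ V : Set α, @IsOpen α t V ∧ x ∈ V ∧ V ⊆ U ∧
          IndDimLE n (↥(@frontier α t V))
            (TopologicalSpace.induced (Subtype.val : ↥(@frontier α t V) → α) t)

/-- The small inductive dimension of a topological space, as an integer
(with junk value if the dimension is infinite). -/
noncomputable def indDim (α : Type u) [t : TopologicalSpace α] : ℤ :=
  sInf {d : ℤ | ∃ m : ℕ, d = (m : ℤ) - 1 ∧ IndDimLE m α t}

section Defs

variable {X : Type u} [TopologicalSpace X]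

/-- `A` is an arc, i.e. homeomorphic to `[0,1]`. -/
def IsArcSet (A : Set X) : Prop :=
  Nonempty (↥A ≃ₜ ↥(Icc (0 : ℝ) 1))

/-- `A` is an arc with end points `a` and `b`. -/
def IsArcFromTo (A : Set X) (a b : X) : Prop :=
  ∃ h : ↥(Icc (0 : ℝ) 1) ≃ₜ ↥A,
    ((h ⟨0, by norm_num⟩ : ↥A) : X) = a ∧ ((h ⟨1, by norm_num⟩ : ↥A) : X) = b

/-- `a` is an end point of the arc `A`. -/
def IsArcEndpoint (A : Set X) (a : X) : Prop := ∃ b, IsArcFromTo A a b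

/-- The points of the arc `A` which are not end points of `A`. -/
def arcInterior (A : Set X) : Set X := {x ∈ A | ¬ IsArcEndpoint A x}

/-- `N` is a simple `n`-od with vertex `v`: the union of `n` arcs emanating from `v`
and otherwise disjoint from each other. -/
def IsSimpleNod (n : ℕ) (N : Set X) (v : X) : Prop :=
  0 < n ∧ ∃ A : Fin n → Set X, (∀ i, IsArcSet (A i)) ∧ (⋃ i, A i) = N ∧
    (∀ i, IsArcEndpoint (A i) v) ∧ ∀ i j, i ≠ j → A i ∩ A j = {v}

/-- `x` has order `n` in the subspace `S`: `x` has a closed neighborhood in `S`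
which is a simple `n`-od having `x` as the vertex. -/
def HasOrdIn (S : Set X) (x : X) (n : ℕ) : Prop :=
  ∃ N : Set X, N ⊆ S ∧ IsClosed N ∧ (∃ U : Set X, IsOpen U ∧ x ∈ U ∧ U ∩ S ⊆ N) ∧
    IsSimpleNod n N x

/-- The order of `x` in the subspace `S`. -/
noncomputable def ordIn (S : Set X) (x : X) : ℕ := sInf {n | HasOrdIn S x n}

/-- End points (order `1`) of the subspace `S`. -/
def endPtsIn (S : Set X) : Set X := {x ∈ S | HasOrdIn S x 1}

/-- Ordinary points (order `2`) of the subspace `S`. -/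
def ordinaryIn (S : Set X) : Set X := {x ∈ S | HasOrdIn S x 2}

/-- Ramification points (order `≥ 3`) of the subspace `S`. -/
def ramifIn (S : Set X) : Set X := {x ∈ S | ∃ n, 3 ≤ n ∧ HasOrdIn S x n}

/-- Vertices (points of order `≠ 2`) of the subspace `S`. -/
def verticesIn (S : Set X) : Set X := {x ∈ S | ¬ HasOrdIn S x 2}

/-- `e` is an edge of the subspace `S`: an arc joining two vertices of `S` and
containing no more than two vertices of `S`. -/
def IsEdgeIn (S : Set X) (e : Set X) : Prop :=
  e ⊆ S ∧ ∃ a b, a ∈ verticesIn S ∧ b ∈ verticesIn S ∧ IsArcFromTo e a b ∧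
    e ∩ verticesIn S ⊆ {a, b}

/-- `S` is a simple closed curve. -/
def IsSimpleClosedCurve (S : Set X) : Prop := Nonempty (↥S ≃ₜ Circle)

end Defs

/-- `X` is an arc (as a space). -/
def IsArcSpace (X : Type u) [TopologicalSpace X] : Prop :=
  Nonempty (X ≃ₜ ↥(Icc (0 : ℝ) 1))

/-- `X` is a finite graph: a continuum which is the union of finitely many arcs, any two
of which are either disjoint or intersect only in one or both of their end points. -/
def IsFiniteGraph (X : Type u) [MetricSpace X] : Prop :=
  CompactSpace X ∧ ConnectedSpace X ∧ Nonempty X ∧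
    ∃ 𝒜 : Finset (Set X), (∀ A ∈ 𝒜, IsArcSet A) ∧ ⋃₀ (𝒜 : Set (Set X)) = univ ∧
      ∀ A ∈ 𝒜, ∀ B ∈ 𝒜, A ≠ B → ∀ x ∈ A ∩ B, IsArcEndpoint A x ∧ IsArcEndpoint B x

/-- `X` is a tree: a finite graph without simple closed curves. -/
def IsTree (X : Type u) [MetricSpace X] : Prop :=
  IsFiniteGraph X ∧ ∀ S : Set X, ¬ IsSimpleClosedCurve S

/-- `X` is neither an arc nor a simple `n`-od. -/
def NotArcNotNod (X : Type u) [MetricSpace X] : Prop :=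
  ¬ IsArcSpace X ∧ ∀ (n : ℕ) (v : X), ¬ IsSimpleNod n (univ : Set X) v

/-- `T(X)`: the union of all edges of `X` disjoint from the set of end points of `X`. -/
def Tpart (X : Type u) [MetricSpace X] : Set X :=
  ⋃₀ {e : Set X | IsEdgeIn (univ : Set X) e ∧ e ∩ endPtsIn (univ : Set X) = ∅}

/-- `Sub_p(T(X))`: subtrees of `T(X)` containing `p` (subcontinua of `T(X)` all of whose
edges are edges of `X`). -/
def SubTreesP (X : Type u) [MetricSpace X] (p : X) : Set (Set X) :=
  {Y | Y ⊆ Tpart X ∧ p ∈ Y ∧ IsCompact Y ∧ IsConnected Y ∧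
    ∀ e : Set X, IsEdgeIn Y e → IsEdgeIn (univ : Set X) e}

/-- Subtrees of the tree `X`. -/
def Subtrees (X : Type u) [MetricSpace X] : Set (Set X) :=
  {Y | IsCompact Y ∧ IsConnected Y ∧
    ∀ e : Set X, IsEdgeIn Y e → IsEdgeIn (univ : Set X) e}

/-- The smallest subtree of `X` containing `a` and `b`. -/
def treeHull (X : Type u) [MetricSpace X] (a b : X) : Set X :=
  ⋂₀ {Y | Y ∈ Subtrees X ∧ a ∈ Y ∧ b ∈ Y}

/-- The hyperspace `C(p,X)` of subcontinua of `X` containing `p`,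
with the Hausdorff metric. -/
def CP (X : Type u) [MetricSpace X] (p : X) : Type u :=
  {A : NonemptyCompacts X // IsConnected (A : Set X) ∧ p ∈ (A : Set X)}

noncomputable instance (X : Type u) [MetricSpace X] (p : X) : MetricSpace (CP X p) :=
  inferInstanceAs (MetricSpace
    {A : NonemptyCompacts X // IsConnected (A : Set X) ∧ p ∈ (A : Set X)})

/-- The underlying subset of `X` of an element of `C(p,X)`. -/
def CP.set {X : Type u} [MetricSpace X] {p : X} (A : CP X p) : Set X := (A.1 : Set X)

/-- `U_n(X)`: elements of `C(p,X)` having a neighborhood in `C(p,X)` homeomorphic to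
the `n`-cell `[0,1]^n`. -/
def Un (X : Type u) [MetricSpace X] (p : X) (n : ℕ) : Set (CP X p) :=
  {A | ∃ N : Set (CP X p), N ∈ 𝓝 A ∧ Nonempty (↥N ≃ₜ (Fin n → ↥(Icc (0 : ℝ) 1)))}

/-- `𝒰(X) = ⋃ₙ U_n(X)`. -/
def UnionUn (X : Type u) [MetricSpace X] (p : X) : Set (CP X p) := ⋃ n : ℕ, Un X p n

/-- The edges of `X` which are not edges of `Y` and intersect `Y`. -/
def incidentE (X : Type u) [MetricSpace X] (Y : Set X) : Set (Set X) :=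
  {e | IsEdgeIn (univ : Set X) e ∧ ¬ IsEdgeIn Y e ∧ (e ∩ Y).Nonempty}

/-- `U_Y`: elements of `C(p,X)` of the form `Y` together with exactly one interior point
of each edge of `X` incident on `Y`. -/
def UofY (X : Type u) [MetricSpace X] (p : X) (Y : Set X) : Set (CP X p) :=
  {B | ∃ f : ↥(incidentE X Y) → X,
    (∀ e : ↥(incidentE X Y), f e ∈ arcInterior (e : Set X)) ∧ B.set = Y ∪ range f}

/-- `(X,p)` has unique hyperspace `C(p,X)` in the class of trees. -/
def UniqueHyperspaceInTrees (X : Type u) [MetricSpace X] (p : X) : Prop :=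
  ∀ (Y : Type u) [MetricSpace Y], IsTree Y → ∀ q : Y,
    Nonempty (CP X p ≃ₜ CP Y q) → ∃ 𝔥 : X ≃ₜ Y, 𝔥 p = q

section Retraction

open MeasureTheory Metric

variable {E : Type*} [NormedAddCommGroup E] [InnerProductSpace ℝ E] [FiniteDimensional ℝ E]

/-- The determinant of `1 + t A` is a polynomial of degree at most `dim E` in `t`. -/
lemma exists_polynomial_eval_eq_det_one_add_smul (A : E →L[ℝ] E) :
    ∃ P : Polynomial ℝ, P.natDegree ≤ Module.finrank ℝ E ∧
      ∀ t : ℝ, P.eval t = (ContinuousLinearMap.id ℝ E + t • A).det := by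
  classical
  let b := Module.finBasis ℝ E
  let M := LinearMap.toMatrix b b (A : E →ₗ[ℝ] E)
  refine ⟨((Polynomial.X : Polynomial ℝ) • M.map Polynomial.C +
    (1 : Matrix _ _ ℝ).map Polynomial.C).det, ?_, fun t => ?_⟩
  · simpa using Polynomial.natDegree_det_X_add_C_le M 1
  · rw [← Polynomial.coe_evalRingHom, RingHom.map_det]
    have : (ContinuousLinearMap.id ℝ E + t • A).det =
        LinearMap.det (LinearMap.id + t • (A : E →ₗ[ℝ] E)) := rfl
    rw [this, ← LinearMap.det_toMatrix b]
    congr 1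
    ext i j
    simp [M, Matrix.one_apply, LinearMap.toMatrix_apply, Finsupp.single_apply, eq_comm]
    split_ifs <;> simp <;> ring

/-- There is no `C¹` retraction of the unit ball onto the unit sphere. -/
lemma no_contDiff_retraction (h : E → E) (hd : ContDiff ℝ 1 h) (hn : ∀ x, ‖h x‖ = 1)
    (hs : ∀ x, ‖x‖ = 1 → h x = x) : False := by
  classical
  borelize E
  let μ : Measure E := volume
  let u : E → E := fun x => h x - x
  have hu : ContDiff ℝ 1 u := hd.sub contDiff_id
  have hud : Differentiable ℝ u := hu.differentiable (by simp)
  have hDc : Continuous (fderiv ℝ u) := hu.continuous_fderiv (by simp)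
  obtain ⟨M, hM⟩ := (isCompact_closedBall (0 : E) 1).exists_bound_of_continuousOn hDc.continuousOn
  have hM0 : 0 ≤ M := (norm_nonneg _).trans (hM 0 (by simp))
  have hLip : ∀ x ∈ closedBall (0 : E) 1, ∀ y ∈ closedBall (0 : E) 1,
      ‖u y - u x‖ ≤ M * ‖y - x‖ := fun x hx y hy =>
    (convex_closedBall (0 : E) 1).norm_image_sub_le_of_norm_fderiv_le (𝕜 := ℝ)
      (fun z _ => hud z) hM hx hy
  let δ : ℝ := 1 / (M + 1)
  have hδ0 : 0 < δ := by positivity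
  have hδ1 : δ ≤ 1 := by
    rw [div_le_one (by positivity)]; linarith
  have hδM : δ * M < 1 := by
    have : δ * (M + 1) = 1 := by simp only [δ]; field_simp
    nlinarith
  have key : ∀ t ∈ Icc 0 δ, t * M < 1 := fun t ht =>
    (mul_le_mul_of_nonneg_right ht.2 hM0).trans_lt hδM
  let f : ℝ → E → E := fun t x => x + t • u x
  let D : ℝ → E → E →L[ℝ] E := fun t x => ContinuousLinearMap.id ℝ E + t • fderiv ℝ u x
  have hfd : ∀ t x, HasStrictFDerivAt (f t) (D t x) x := fun t x =>
    (hasStrictFDerivAt_id x).add ((hu.contDiffAt.hasStrictFDerivAt (by simp)).const_smul t)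
  have hinjD : ∀ t ∈ Icc 0 δ, ∀ x ∈ closedBall (0 : E) 1, Function.Injective (D t x) := by
    intro t ht x hx
    refine (injective_iff_map_eq_zero _).2 fun v hv => ?_
    by_contra hv0
    have h1 : v = -(t • fderiv ℝ u x v) := by
      have : v + t • fderiv ℝ u x v = 0 := by simpa [D] using hv
      exact eq_neg_of_add_eq_zero_left this
    have h2 : ‖v‖ ≤ t * (M * ‖v‖) := by
      calc ‖v‖ = ‖t • fderiv ℝ u x v‖ := by rw [← norm_neg (t • _), ← h1]
        _ = t * ‖fderiv ℝ u x v‖ := by rw [norm_smul, Real.norm_of_nonneg ht.1]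
        _ ≤ t * (M * ‖v‖) := mul_le_mul_of_nonneg_left
            ((fderiv ℝ u x).le_of_opNorm_le (hM x hx) v) ht.1
    have := key t ht
    have := norm_pos_iff.2 hv0
    nlinarith
  have hdetne : ∀ t ∈ Icc 0 δ, ∀ x ∈ closedBall (0 : E) 1, (D t x).det ≠ 0 := by
    intro t ht x hx h0
    have := LinearMap.bot_lt_ker_of_det_eq_zero (f := ((D t x : E →L[ℝ] E) : E →ₗ[ℝ] E)) h0
    rw [LinearMap.ker_eq_bot.2 (hinjD t ht x hx)] at this
    exact lt_irrefl _ this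
  choose P hPdeg hPeval using fun x => exists_polynomial_eval_eq_det_one_add_smul (fderiv ℝ u x)
  have hdetpos : ∀ t ∈ Icc 0 δ, ∀ x ∈ closedBall (0 : E) 1, 0 < (D t x).det := by
    intro t ht x hx
    by_contra hneg
    have hc : ContinuousOn (fun s => (P x).eval s) (Icc 0 t) := (P x).continuous.continuousOn
    have h0 : (P x).eval 0 = 1 := by
      rw [hPeval]; simp [ContinuousLinearMap.det]
    obtain ⟨s, hs, hs0⟩ := intermediate_value_Icc' ht.1 hc
      (show (0 : ℝ) ∈ Icc _ _ from ⟨by rw [hPeval]; exact not_lt.1 hneg, by rw [h0]; norm_num⟩)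
    exact hdetne s ⟨hs.1, hs.2.trans ht.2⟩ x hx (by rw [← hs0]; exact (hPeval x s).symm)
  have hinj : ∀ t ∈ Icc 0 δ, InjOn (f t) (closedBall 0 1) := by
    intro t ht x hx y hy hxy
    by_contra hne
    have h1 : y - x = -(t • (u y - u x)) := by
      have : x + t • u x = y + t • u y := hxy
      rw [smul_sub]
      have h3 : y - x = t • u x - t • u y := by
        rw [sub_eq_sub_iff_add_eq_add, add_comm (t • u x), ← this, add_comm]
      rw [h3]; abel
    have h2 : ‖y - x‖ ≤ t * (M * ‖y - x‖) := by
      calc ‖y - x‖ = ‖t • (u y - u x)‖ := by rw [← norm_neg (t • _), ← h1]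
        _ = t * ‖u y - u x‖ := by rw [norm_smul, Real.norm_of_nonneg ht.1]
        _ ≤ _ := mul_le_mul_of_nonneg_left (hLip x hx y hy) ht.1
    have := key t ht
    have : 0 < ‖y - x‖ := norm_pos_iff.2 (sub_ne_zero.2 (Ne.symm hne))
    nlinarith
  have hmaps : ∀ t ∈ Ico (0 : ℝ) 1, ∀ x ∈ ball (0 : E) 1, f t x ∈ ball (0 : E) 1 := by
    intro t ht x hx
    rw [mem_ball_zero_iff] at hx ⊢
    have : f t x = (1 - t) • x + t • h x := by simp only [f, u]; module
    rw [this]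
    calc ‖(1 - t) • x + t • h x‖ ≤ (1 - t) * ‖x‖ + t * ‖h x‖ := by
          refine (norm_add_le _ _).trans ?_
          rw [norm_smul, norm_smul, Real.norm_of_nonneg ht.1,
            Real.norm_of_nonneg (by linarith [ht.2])]
      _ < 1 := by rw [hn]; nlinarith [ht.1, ht.2]
  have hfc : ∀ t, Continuous (f t) := fun t => continuous_id.add (hu.continuous.const_smul t)
  have himg : ∀ t ∈ Icc 0 δ, t < 1 → f t '' ball 0 1 = ball 0 1 := by
    intro t ht ht1
    refine subset_antisymm (image_subset_iff.2 fun x hx => hmaps t ⟨ht.1, ht1⟩ x hx) ?_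
    refine (convex_ball (0 : E) 1).isPreconnected.subset_of_closure_inter_subset ?_ ?_ ?_
    · rw [isOpen_iff_mem_nhds]
      rintro _ ⟨x, hx, rfl⟩
      have hsurj : (D t x : E →L[ℝ] E).range = ⊤ :=
        LinearMap.range_eq_top.2 ((LinearMap.injective_iff_surjective
          (f := ((D t x : E →L[ℝ] E) : E →ₗ[ℝ] E))).1
          (hinjD t ht x (ball_subset_closedBall hx)))
      rw [← (hfd t x).map_nhds_eq_of_surj hsurj]
      exact Filter.image_mem_map (isOpen_ball.mem_nhds hx)
    · exact ⟨f t 0, hmaps t ⟨ht.1, ht1⟩ 0 (by simp), 0, by simp, rfl⟩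
    · rintro y ⟨hy, hyb⟩
      have hcl : closure (f t '' ball 0 1) ⊆ f t '' closedBall 0 1 :=
        closure_minimal (image_mono ball_subset_closedBall)
          ((isCompact_closedBall (0 : E) 1).image (hfc t)).isClosed
      obtain ⟨x, hx, rfl⟩ := hcl hy
      rcases (mem_closedBall_zero_iff.1 hx).lt_or_eq with hlt | heq
      · exact ⟨x, mem_ball_zero_iff.2 hlt, rfl⟩
      · have : f t x = x := by simp [f, u, hs x heq]
        rw [this, mem_ball_zero_iff, heq] at hyb
        exact absurd hyb (lt_irrefl _)
  have hvol : ∀ t ∈ Icc 0 δ, t < 1 →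
      ∫ x in ball (0 : E) 1, (P x).eval t ∂μ = μ.real (ball (0 : E) 1) := by
    intro t ht ht1
    have := integral_image_eq_integral_abs_det_fderiv_smul μ
      (measurableSet_ball (x := (0 : E)) (ε := 1))
      (fun x _ => (hfd t x).hasFDerivAt.hasFDerivWithinAt)
      ((hinj t ht).mono ball_subset_closedBall) (fun _ => (1 : ℝ))
    rw [himg t ht ht1] at this
    simp only [smul_eq_mul, mul_one, integral_const, MeasurableSet.univ,
      measureReal_restrict_apply, univ_inter] at this
    rw [this]
    refine setIntegral_congr_fun measurableSet_ball fun x hx => ?_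
    simp only [hPeval]
    rw [abs_of_pos (hdetpos t ht x (ball_subset_closedBall hx))]
  -- interpolate from the values at small times
  let d := Module.finrank ℝ E
  let τ : ℕ → ℝ := fun j => δ * (j / (d + 1))
  have hτinj : InjOn τ (Finset.range (d + 1)) := by
    intro i _ j _ hij
    have h1 : δ * ((i : ℝ) / (d + 1)) = δ * ((j : ℝ) / (d + 1)) := hij
    have h2 := mul_left_cancel₀ hδ0.ne' h1
    have h3 : ((d : ℝ) + 1) ≠ 0 := by positivity
    field_simp at h2
    exact_mod_cast h2
  have hτ : ∀ j ∈ Finset.range (d + 1), τ j ∈ Icc 0 δ ∧ τ j < 1 := by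
    intro j hj
    have hj' : (j : ℝ) < d + 1 := by exact_mod_cast Finset.mem_range.1 hj
    have h1 : (j : ℝ) / (d + 1) < 1 := by rw [div_lt_one (by positivity)]; exact hj'
    have h0 : (0 : ℝ) ≤ (j : ℝ) / (d + 1) := by positivity
    refine ⟨⟨by positivity, ?_⟩, ?_⟩ <;> simp only [τ] <;> nlinarith
  have hinterp : ∀ x, (P x).eval 1 = ∑ j ∈ Finset.range (d + 1),
      (P x).eval (τ j) * (Lagrange.basis (Finset.range (d + 1)) τ j).eval 1 := by
    intro x
    have hdeg : (P x).degree < (Finset.range (d + 1)).card := by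
      rw [Finset.card_range]
      refine lt_of_le_of_lt Polynomial.degree_le_natDegree ?_
      exact_mod_cast Nat.lt_succ_of_le (hPdeg x)
    conv_lhs => rw [Lagrange.eq_interpolate hτinj hdeg, Lagrange.interpolate_apply]
    simp [Polynomial.eval_finsetSum]
  have hint : ∀ t, IntegrableOn (fun x => (P x).eval t) (ball (0 : E) 1) μ := by
    intro t
    have hc : Continuous fun x => (P x).eval t := by
      simp only [hPeval]
      exact ContinuousLinearMap.continuous_det.comp (by fun_prop)
    exact (hc.continuousOn.integrableOn_compact (isCompact_closedBall (0 : E) 1)).mono_set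
      ball_subset_closedBall
  have hone : ∫ x in ball (0 : E) 1, (P x).eval 1 ∂μ = μ.real (ball (0 : E) 1) := by
    simp only [hinterp]
    rw [integral_finsetSum _ fun j _ => (hint (τ j)).mul_const _]
    simp only [integral_mul_const]
    rw [Finset.sum_congr rfl fun j hj => by rw [hvol (τ j) (hτ j hj).1 (hτ j hj).2],
      ← Finset.mul_sum, ← Polynomial.eval_finsetSum, Lagrange.sum_basis hτinj (by simp)]
    simp
  have hzero : ∀ x ∈ ball (0 : E) 1, (P x).eval 1 = 0 := by
    intro x _
    rw [hPeval, one_smul]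
    have hDh : ContinuousLinearMap.id ℝ E + fderiv ℝ u x = fderiv ℝ h x := by
      have : fderiv ℝ u x = fderiv ℝ h x - ContinuousLinearMap.id ℝ E := by
        simp only [u]
        rw [fderiv_fun_sub (hd.differentiable (by simp) x) differentiableAt_fun_id, fderiv_fun_id]
      rw [this]; abel
    rw [hDh]
    by_contra hdet
    have hbij : Function.Surjective (fderiv ℝ h x) := by
      have h2 : IsUnit ((fderiv ℝ h x : E →L[ℝ] E) : E →ₗ[ℝ] E) :=
        (LinearMap.isUnit_iff_isUnit_det _).2 (isUnit_iff_ne_zero.2 hdet)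
      exact ((Module.End.isUnit_iff _).1 h2).2
    have horth : ∀ v, inner ℝ (h x) (fderiv ℝ h x v) = 0 := by
      intro v
      have hdx : HasFDerivAt h (fderiv ℝ h x) x := (hd.differentiable (by simp) x).hasFDerivAt
      have h1 := hdx.norm_sq
      have h2 : (fun y => ‖h y‖ ^ 2) = fun _ => (1 : ℝ) := by funext y; rw [hn]; norm_num
      rw [h2] at h1
      have h3 := congrArg (fun L => L v) (h1.unique (hasFDerivAt_const (1 : ℝ) x))
      simpa using h3
    obtain ⟨v, hv⟩ := hbij (h x)
    have := horth v
    rw [hv, real_inner_self_eq_norm_sq, hn] at this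
    norm_num at this
  rw [setIntegral_congr_fun measurableSet_ball hzero] at hone
  have hpos : 0 < μ.real (ball (0 : E) 1) :=
    ENNReal.toReal_pos (measure_ball_pos μ 0 one_pos).ne' measure_ball_lt_top.ne
  simp at hone
  linarith

/-- A continuous map of `E` to a space of smaller dimension is not injective on any ball. -/
theorem not_injOn_closedBall_of_finrank_lt {F : Type*} [NormedAddCommGroup F] [NormedSpace ℝ F]
    [FiniteDimensional ℝ F] (hdim : Module.finrank ℝ F < Module.finrank ℝ E)
    {f : E → F} (hf : Continuous f) {c : E} {r : ℝ} (hr : 0 < r) :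
    ¬ InjOn f (closedBall c r) := by
  classical
  intro hinj0
  -- reduce to the unit ball
  obtain ⟨f, hf, hinj⟩ : ∃ f : E → F, Continuous f ∧ InjOn f (closedBall 0 1) := by
    refine ⟨fun x => f (c + r • x), by fun_prop, fun x hx y hy hxy => ?_⟩
    have hmem : ∀ z ∈ closedBall (0 : E) 1, c + r • z ∈ closedBall c r := by
      intro z hz
      rw [mem_closedBall_zero_iff] at hz
      rw [mem_closedBall_iff_norm, add_sub_cancel_left, norm_smul, Real.norm_of_nonneg hr.le]
      nlinarith
    have := hinj0 (hmem x hx) (hmem y hy) hxy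
    exact smul_right_injective E hr.ne' (add_left_cancel this)
  -- a continuous left inverse
  obtain ⟨g, hg⟩ : ∃ g : C(F, E), ∀ x ∈ closedBall (0 : E) 1, g (f x) = x := by
    have he : IsClosedEmbedding (fun x : closedBall (0 : E) 1 => f x) := by
      have : CompactSpace (closedBall (0 : E) 1) :=
        isCompact_iff_compactSpace.1 (isCompact_closedBall _ _)
      exact (hf.comp continuous_subtype_val).isClosedEmbedding
        (fun x y hxy => Subtype.ext (hinj x.2 y.2 hxy))
    have : TietzeExtension E :=
      TietzeExtension.of_homeo (toEuclidean (E := E)).toHomeomorph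
    obtain ⟨g, hg⟩ := ContinuousMap.exists_extension he
      (⟨Subtype.val, continuous_subtype_val⟩ : C(closedBall (0 : E) 1, E))
    exact ⟨g, fun x hx => DFunLike.congr_fun hg ⟨x, hx⟩⟩
  obtain ⟨g', hg'd, hg'⟩ : ∃ g' : F → E, ContDiff ℝ 1 g' ∧ ∀ y, dist (g' y) (g y) < 1 / 8 := by
    obtain ⟨g', h1, h2, -⟩ := g.continuous.exists_contDiff_approx 1 (ε := fun _ => 1 / 8)
      continuous_const (fun _ => by norm_num)
    exact ⟨g', by exact_mod_cast h1, h2⟩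
  obtain ⟨c, hc, hc0⟩ := (hg'd.dense_compl_range_of_finrank_lt_finrank hdim).exists_dist_lt 0
    (show (0 : ℝ) < 1 / 8 by norm_num)
  rw [dist_zero_left] at hc0
  let Φ : E → E := fun x => g' (f x) - c
  have hΦ0 : ∀ x, Φ x ≠ 0 := fun x h0 => hc ⟨f x, sub_eq_zero.1 h0⟩
  have hΦc : Continuous Φ := (hg'd.continuous.comp hf).sub continuous_const
  have hΦ : ∀ x, ‖x‖ ≤ 1 → ‖Φ x - x‖ < 1 / 4 := by
    intro x hx
    have h1 := hg' (f x)
    rw [hg x (mem_closedBall_zero_iff.2 hx), dist_eq_norm] at h1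
    have : Φ x - x = (g' (f x) - x) - c := by simp only [Φ]; abel
    rw [this]
    calc _ ≤ ‖g' (f x) - x‖ + ‖c‖ := norm_sub_le _ _
      _ < 1 / 4 := by linarith
  let χ : E → ℝ := fun x => max 0 (min 1 (3 - 4 * ‖x‖))
  have hχ01 : ∀ x, 0 ≤ χ x ∧ χ x ≤ 1 := fun x =>
    ⟨le_max_left _ _, max_le zero_le_one (min_le_left _ _)⟩
  let Ψ : E → E := fun x => x + χ x • (Φ x - x)
  have hΨc : Continuous Ψ := by
    have : Continuous χ := by fun_prop
    fun_prop
  have hΨid : ∀ x, 3 / 4 ≤ ‖x‖ → Ψ x = x := by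
    intro x hx
    have : χ x = 0 := max_eq_left ((min_le_right _ _).trans (by linarith))
    simp [Ψ, this]
  have hΨ0 : ∀ x, Ψ x ≠ 0 := by
    intro x h0
    rcases le_total ‖x‖ (1 / 2) with hx | hx
    · have : χ x = 1 := by
        simp only [χ]
        rw [min_eq_left (by linarith), max_eq_right zero_le_one]
      simp only [Ψ, this, one_smul, add_sub_cancel] at h0
      exact hΦ0 x h0
    · rcases le_total ‖x‖ 1 with hx1 | hx1
      · have h1 : x = -(χ x • (Φ x - x)) := eq_neg_of_add_eq_zero_left h0
        have h2 : ‖x‖ = χ x * ‖Φ x - x‖ := by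
          conv_lhs => rw [h1, norm_neg, norm_smul, Real.norm_of_nonneg (hχ01 x).1]
        have := hΦ x hx1
        have := (hχ01 x).2
        nlinarith [norm_nonneg (Φ x - x)]
      · rw [hΨid x (by linarith)] at h0
        rw [h0, norm_zero] at hx1
        linarith
  obtain ⟨G, hGd, hG, hGid, -⟩ := hΨc.exists_contDiff_approx_and_eqOn 1
    (ε := fun x => ‖Ψ x‖) hΨc.norm (fun x => norm_pos_iff.2 (hΨ0 x))
    (S := {x : E | 7 / 8 ≤ ‖x‖}) (U := {x : E | 3 / 4 < ‖x‖})
    (isClosed_le continuous_const continuous_norm)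
    ((isOpen_lt continuous_const continuous_norm).mem_nhdsSet.2 fun x hx => by
      simp only [mem_ofPred_eq] at hx ⊢; linarith)
    (contDiffOn_id.congr fun x hx => hΨid x (le_of_lt hx))
  have hG0 : ∀ x, G x ≠ 0 := by
    intro x h0
    have := hG x
    rw [h0, dist_zero_left] at this
    exact lt_irrefl _ this
  have hGd' : ContDiff ℝ 1 G := by exact_mod_cast hGd
  refine no_contDiff_retraction (fun x => ‖G x‖⁻¹ • G x)
    (((hGd'.norm ℝ hG0).inv fun x => (norm_ne_zero_iff.2 (hG0 x))).smul hGd') (fun x => ?_)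
    (fun x hx => ?_)
  · rw [norm_smul, norm_inv, norm_norm, inv_mul_cancel₀ (norm_ne_zero_iff.2 (hG0 x))]
  · have h1 : G x = x := (hGid (show 7 / 8 ≤ ‖x‖ by rw [hx]; norm_num)).trans
      (hΨid x (by rw [hx]; norm_num))
    rw [h1, hx]; simp

end Retraction

section Forest

variable (F : Type*) [PartialOrder F]

/-- A partial order is a forest if the elements below any given one form a chain. -/
def IsForest : Prop := ∀ a b c : F, a ≤ c → b ≤ c → a ≤ b ∨ b ≤ a

/-- No element of the order has exactly one upper cover. -/
def IsBranching : Prop := ∀ e c : F, e < c → ∃ f, e < f ∧ ¬ c ≤ f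

/-- The elements of `F` think of edges of a rooted tree; a vector in `cellComplex F` records which
initial part of each edge lies in a subcontinuum containing the root. -/
def cellComplex : Set (F → ℝ) :=
  {x | (∀ e, x e ∈ Icc (0 : ℝ) 1) ∧ ∀ e f, 0 < x e → f < e → x f = 1}

/-- The geometric realization of the rooted tree with edges `F`. -/
def realization : Set (F → ℝ) :=
  {x ∈ cellComplex F | ∀ e f, 0 < x e → 0 < x f → e ≤ f ∨ f ≤ e}

/-- The elements of `F` which are not maximal. -/
abbrev InnerEdge := {e : F // ¬ IsMax e}

variable {F}

/-- The elements strictly below `c`. -/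
def strictBelow (c : F) : LowerSet (InnerEdge F) where
  carrier := {f | f.1 < c}
  lower' _ _ hba ha := lt_of_le_of_lt (show _ ≤ _ from hba) ha

lemma mem_strictBelow {c : F} {f : InnerEdge F} : f ∈ strictBelow c ↔ f.1 < c := Iff.rfl

/-- The edges leaving the subtree `I`. -/
def outEdges (I : LowerSet (InnerEdge F)) : Set F :=
  {c | strictBelow c ≤ I ∧ ∀ h : ¬ IsMax c, (⟨c, h⟩ : InnerEdge F) ∉ I}

lemma inner_of_lt {f c : F} (h : f < c) : ¬ IsMax f := fun hm => hm.not_lt h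

lemma IsForest.le_of_covBy (hF : IsForest F) {f e c : F} (hec : e ⋖ c) (hf : f < c) : f ≤ e := by
  rcases hF f e c hf.le hec.le with h | h
  · exact h
  · rcases h.eq_or_lt with h | h
    · exact h.ge
    · exact absurd hf (hec.2 h)

section Counting

variable [Finite F]

lemma ncard_outEdges_add (I : LowerSet (InnerEdge F)) :
    (outEdges I).ncard + (I : Set (InnerEdge F)).ncard = {c : F | strictBelow c ≤ I}.ncard := by
  have h : {c : F | strictBelow c ≤ I} = outEdges I ∪ Subtype.val '' (I : Set (InnerEdge F)) := by
    ext c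
    constructor
    · intro hc
      by_cases h : ∃ h : ¬ IsMax c, (⟨c, h⟩ : InnerEdge F) ∈ I
      · obtain ⟨h, hI⟩ := h
        exact Or.inr ⟨⟨c, h⟩, hI, rfl⟩
      · exact Or.inl ⟨hc, fun h1 h2 => h ⟨h1, h2⟩⟩
    · rintro (hc | ⟨c, hc, rfl⟩)
      · exact hc.1
      · exact fun f hf => I.lower (show f ≤ c from (mem_strictBelow.1 hf).le) hc
  have hd : Disjoint (outEdges I) (Subtype.val '' (I : Set (InnerEdge F))) := by
    rw [Set.disjoint_left]
    rintro _ hc ⟨c, hcI, rfl⟩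
    exact hc.2 c.2 hcI
  rw [h, Set.ncard_union_eq hd, Set.ncard_image_of_injective _ Subtype.val_injective]

lemma exists_two_covers (hB : IsBranching F) {e : F} (he : ¬ IsMax e) :
    ∃ c c' : F, e ⋖ c ∧ e ⋖ c' ∧ c ≠ c' := by
  classical
  have := Fintype.ofFinite F
  have hex : ∀ f, e < f → ∃ c, e ⋖ c ∧ c ≤ f := by
    intro f hf
    obtain ⟨c, hc⟩ := (Set.toFinite {c | e < c ∧ c ≤ f}).exists_minimal ⟨f, hf, le_rfl⟩
    refine ⟨c, ⟨hc.prop.1, fun b hb hbc => ?_⟩, hc.prop.2⟩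
    exact (hc.le_of_le ⟨hb, hbc.le.trans hc.prop.2⟩ hbc.le).not_gt hbc
  obtain ⟨f, hf⟩ := not_isMax_iff.1 he
  obtain ⟨c, hc, -⟩ := hex f hf
  obtain ⟨g, hg, hcg⟩ := hB e c hc.lt
  obtain ⟨c', hc', hc'g⟩ := hex g hg
  exact ⟨c, c', hc, hc', fun h => hcg (h ▸ hc'g)⟩

lemma ncard_outEdges_strictMono (hF : IsForest F) (hB : IsBranching F) :
    StrictMono fun I : LowerSet (InnerEdge F) => (outEdges I).ncard := by
  intro I J hIJ
  choose c c' hc hc' hne using fun e : InnerEdge F => exists_two_covers hB e.2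
  have hle : I ≤ J := hIJ.le
  -- the covers of the elements of `J \ I` are distinct new elements
  let S : Set (InnerEdge F) := (J : Set (InnerEdge F)) \ I
  have hSne : S.Nonempty := by
    by_contra h
    rw [Set.not_nonempty_iff_eq_empty, Set.sdiff_eq_empty] at h
    exact hIJ.not_ge h
  have huniq : ∀ {e e' : InnerEdge F} {x : F}, e.1 ⋖ x → e'.1 ⋖ x → e = e' := fun h h' =>
    Subtype.ext (le_antisymm (hF.le_of_covBy h' h.lt) (hF.le_of_covBy h h'.lt))
  have hci : Function.Injective c := fun e e' h => huniq (hc e) (h ▸ hc e')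
  have hci' : Function.Injective c' := fun e e' h => huniq (hc' e) (h ▸ hc' e')
  have hdisj : Disjoint (c '' S) (c' '' S) := by
    rw [Set.disjoint_left]
    rintro _ ⟨e, -, rfl⟩ ⟨e', -, h⟩
    have : e = e' := huniq (hc e) (h ▸ hc' e')
    subst this
    exact hne e h.symm
  have hmem : ∀ {e : InnerEdge F} {x : F}, e ∈ S → e.1 ⋖ x →
      strictBelow x ≤ J ∧ ¬ strictBelow x ≤ I := by
    intro e x he hx
    exact ⟨fun f hf => J.lower (show f ≤ e from hF.le_of_covBy hx hf) he.1,
      fun h => he.2 (h hx.lt)⟩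
  have hsub : c '' S ∪ c' '' S ∪ {x | strictBelow x ≤ I} ⊆ {x | strictBelow x ≤ J} := by
    rintro x ((⟨e, he, rfl⟩ | ⟨e, he, rfl⟩) | hx)
    · exact (hmem he (hc e)).1
    · exact (hmem he (hc' e)).1
    · exact le_trans hx hle
  have hdisj2 : Disjoint (c '' S ∪ c' '' S) {x | strictBelow x ≤ I} := by
    rw [Set.disjoint_left]
    rintro x (⟨e, he, rfl⟩ | ⟨e, he, rfl⟩) hx
    · exact (hmem he (hc e)).2 hx
    · exact (hmem he (hc' e)).2 hx
  have h1 := Set.ncard_le_ncard hsub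
  rw [Set.ncard_union_eq hdisj2, Set.ncard_union_eq hdisj, Set.ncard_image_of_injective _ hci,
    Set.ncard_image_of_injective _ hci', ← ncard_outEdges_add, ← ncard_outEdges_add] at h1
  have h2 : S.ncard + (I : Set (InnerEdge F)).ncard = (J : Set (InnerEdge F)).ncard :=
    Set.ncard_sdiff_add_ncard_of_subset hle
  have h3 : 0 < S.ncard := (Set.ncard_pos).2 hSne
  show (outEdges I).ncard < (outEdges J).ncard
  omega

end Counting

end Forest

section Strata

variable {Z W : Type*} [TopologicalSpace Z] [TopologicalSpace W]

/-- Every neighbourhood of `z` contains a topological copy of `ℝⁿ`. -/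
def HasLocalCell (n : ℕ) (z : Z) : Prop :=
  ∀ U ∈ 𝓝 z, ∃ φ : EuclideanSpace ℝ (Fin n) → Z,
    Continuous φ ∧ Function.Injective φ ∧ ∀ t, φ t ∈ U

lemma HasLocalCell.map {n : ℕ} {z : Z} (hz : HasLocalCell n z) (h : Z ≃ₜ W) :
    HasLocalCell n (h z) := by
  intro U hU
  obtain ⟨φ, h1, h2, h3⟩ := hz (h ⁻¹' U) (h.continuous.continuousAt hU)
  exact ⟨h ∘ φ, h.continuous.comp h1, h.injective.comp h2, h3⟩

lemma hasLocalCell_map_iff {n : ℕ} {z : Z} (h : Z ≃ₜ W) :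
    HasLocalCell n (h z) ↔ HasLocalCell n z :=
  ⟨fun H => by simpa using H.map h.symm, fun H => H.map h⟩

/-- `z` and `w` lie in a connected set along which the dimension is constant. -/
def SameStratum (z w : Z) : Prop :=
  ∃ S : Set Z, IsPreconnected S ∧ z ∈ S ∧ w ∈ S ∧
    ∀ y ∈ S, ∀ n, HasLocalCell n y ↔ HasLocalCell n z

lemma SameStratum.map {z w : Z} (hzw : SameStratum z w) (h : Z ≃ₜ W) :
    SameStratum (h z) (h w) := by
  obtain ⟨S, hS, hz, hw, hd⟩ := hzw
  refine ⟨h '' S, hS.image _ h.continuous.continuousOn, ⟨z, hz, rfl⟩, ⟨w, hw, rfl⟩, ?_⟩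
  rintro _ ⟨y, hy, rfl⟩ n
  rw [hasLocalCell_map_iff, hasLocalCell_map_iff, hd y hy n]

end Strata

section CellComplex

variable {F : Type*} [PartialOrder F]

/-- The inner edges completely contained in the subcontinuum `x`. -/
def fullEdges (x : cellComplex F) : LowerSet (InnerEdge F) where
  carrier := {e | x.1 e = 1}
  lower' a b hba (ha : x.1 a = 1) := by
    rcases hba.eq_or_lt with h | h
    · rw [h]; exact ha
    · exact x.2.2 a b (by rw [ha]; exact one_pos) h

lemma mem_fullEdges {x : cellComplex F} {e : InnerEdge F} : e ∈ fullEdges x ↔ x.1 e = 1 := Iff.rfl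

lemma strictBelow_le_fullEdges {x : cellComplex F} {c : F} (hc : 0 < x.1 c) :
    strictBelow c ≤ fullEdges x := fun f hf => x.2.2 c f hc hf

/-- A point of the complex is determined by its full edges and the coordinates on the edges
leaving the subtree they form. -/
lemma cellComplex_ext {x y : cellComplex F} (hI : fullEdges x = fullEdges y)
    (h : ∀ c ∈ outEdges (fullEdges x), x.1 c = y.1 c) : x = y := by
  have key : ∀ (x : cellComplex F) (c : F), c ∉ outEdges (fullEdges x) →
      (∀ h : ¬ IsMax c, (⟨c, h⟩ : InnerEdge F) ∉ fullEdges x) → x.1 c = 0 := by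
    intro x c h1 h2
    refine le_antisymm (not_lt.1 fun hpos => h1 ⟨strictBelow_le_fullEdges hpos, h2⟩) (x.2.1 c).1
  refine Subtype.ext (funext fun c => ?_)
  by_cases hc : c ∈ outEdges (fullEdges x)
  · exact h c hc
  by_cases hc' : ∃ h : ¬ IsMax c, (⟨c, h⟩ : InnerEdge F) ∈ fullEdges x
  · obtain ⟨h, hx⟩ := hc'
    have hy := hI ▸ hx
    exact (mem_fullEdges.1 hx).trans (mem_fullEdges.1 hy).symm
  · push Not at hc'
    rw [key x c hc hc', key y c (hI ▸ hc) (hI ▸ hc')]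

variable [Fintype F]

lemma eventually_fullEdges_le (x : cellComplex F) : ∀ᶠ y in 𝓝 x, fullEdges y ≤ fullEdges x := by
  have h : ∀ e : InnerEdge F, ∀ᶠ y : cellComplex F in 𝓝 x, y.1 e = 1 → x.1 e = 1 := by
    intro e
    by_cases he : x.1 e = 1
    · exact Filter.Eventually.of_forall fun _ _ => he
    · have hc : Continuous fun y : cellComplex F => y.1 e :=
        (continuous_apply _).comp continuous_subtype_val
      filter_upwards [hc.continuousAt.eventually_ne he] with y hy hy1
      exact absurd hy1 hy
  filter_upwards [Filter.eventually_all.2 h] with y hy e he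
  exact hy e he

lemma HasLocalCell.le_ncard (hF : IsForest F) (hB : IsBranching F) {n : ℕ} {x : cellComplex F}
    (hx : HasLocalCell n x) : n ≤ (outEdges (fullEdges x)).ncard := by
  classical
  obtain ⟨φ, hφc, hφi, hφU⟩ := hx _ (eventually_fullEdges_le x)
  obtain ⟨J, hJ⟩ := (Set.toFinite (range fun t => fullEdges (φ t))).exists_minimal
    (range_nonempty _)
  obtain ⟨t, rfl⟩ := hJ.prop
  have hev : ∀ᶠ s in 𝓝 t, fullEdges (φ s) = fullEdges (φ t) := by
    filter_upwards [hφc.continuousAt.eventually (eventually_fullEdges_le (φ t))] with s hs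
    exact le_antisymm hs (hJ.le_of_le ⟨s, rfl⟩ hs)
  obtain ⟨r, hr, hball⟩ := Metric.nhds_basis_closedBall.mem_iff.1 hev
  refine le_trans ?_ ((ncard_outEdges_strictMono hF hB).monotone (hφU t))
  by_contra hlt
  let g : EuclideanSpace ℝ (Fin n) → (outEdges (fullEdges (φ t)) → ℝ) := fun s c => (φ s).1 c
  have hg : Continuous g := continuous_pi fun c =>
    (continuous_apply _).comp (continuous_subtype_val.comp hφc)
  refine not_injOn_closedBall_of_finrank_lt ?_ hg (c := t) hr ?_
  · rw [Module.finrank_fintype_fun_eq_card, finrank_euclideanSpace_fin,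
      ← Nat.card_eq_fintype_card, Nat.card_coe_set_eq]
    exact not_le.1 hlt
  · intro s hs s' hs' h
    have h1 := hball hs
    have h2 := hball hs'
    simp only [mem_ofPred_eq] at h1 h2
    refine hφi (cellComplex_ext (h1.trans h2.symm) fun c hc => ?_)
    rw [h1] at hc
    exact congrFun h ⟨c, hc⟩

lemma hasLocalCell_of_le_ncard {n : ℕ} {x : cellComplex F}
    (hn : n ≤ (outEdges (fullEdges x)).ncard) : HasLocalCell n x := by
  classical
  intro U hU
  obtain ⟨ε, hε, hball⟩ := Metric.mem_nhds_iff.1 hU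
  obtain ⟨ι⟩ : Nonempty (Fin n ↪ outEdges (fullEdges x)) := by
    refine Function.Embedding.nonempty_of_card_le ?_
    rwa [Fintype.card_fin, ← Nat.card_eq_fintype_card, Nat.card_coe_set_eq]
  let δ : ℝ := min (ε / 2) (1 / 2)
  have hδ0 : 0 < δ := lt_min (by linarith) (by norm_num)
  have hδ1 : δ ≤ 1 / 2 := min_le_right _ _
  have hδε : δ < ε := (min_le_left _ _).trans_lt (by linarith)
  let j : Fin n → F := fun i => (ι i).1
  have hj : Function.Injective j := Subtype.val_injective.comp ι.injective
  let ψ : EuclideanSpace ℝ (Fin n) → F → ℝ := fun t c =>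
    if h : ∃ i, j i = c then (1 - δ) * x.1 c + δ * Real.sigmoid (t h.choose) else x.1 c
  have hψj : ∀ t i, ψ t (j i) = (1 - δ) * x.1 (j i) + δ * Real.sigmoid (t i) := by
    intro t i
    have h : ∃ i', j i' = j i := ⟨i, rfl⟩
    simp only [ψ, dif_pos h, hj h.choose_spec]
  have hψn : ∀ t c, c ∉ outEdges (fullEdges x) → ψ t c = x.1 c := by
    intro t c hc
    have h : ¬ ∃ i, j i = c := by
      rintro ⟨i, rfl⟩
      exact hc (ι i).2
    simp only [ψ, dif_neg h]
  have hσ : ∀ s, Real.sigmoid s ∈ Ioo (0 : ℝ) 1 := fun s =>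
    ⟨Real.sigmoid_pos s, Real.sigmoid_lt_one s⟩
  have hψ01 : ∀ t c, ψ t c ∈ Icc (0 : ℝ) 1 ∧ |ψ t c - x.1 c| ≤ δ := by
    intro t c
    have hxc := x.2.1 c
    by_cases h : ∃ i, j i = c
    · obtain ⟨i, rfl⟩ := h
      have hs := hσ (t i)
      rw [hψj]
      refine ⟨⟨by nlinarith [hxc.1, hs.1], by nlinarith [hxc.2, hs.2]⟩, ?_⟩
      have : (1 - δ) * x.1 (j i) + δ * Real.sigmoid (t i) - x.1 (j i) =
        δ * (Real.sigmoid (t i) - x.1 (j i)) := by ring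
      rw [this, abs_mul, abs_of_pos hδ0]
      have : |Real.sigmoid (t i) - x.1 (j i)| ≤ 1 :=
        abs_sub_le_iff.2 ⟨by linarith [hxc.1, hs.2], by linarith [hxc.2, hs.1]⟩
      nlinarith
    · simp only [ψ, dif_neg h, sub_self, abs_zero]
      exact ⟨hxc, hδ0.le⟩
  have hmem : ∀ t, ψ t ∈ cellComplex F := by
    refine fun t => ⟨fun e => (hψ01 t e).1, fun e f he hfe => ?_⟩
    have hfI : (⟨f, inner_of_lt hfe⟩ : InnerEdge F) ∈ fullEdges x := by
      by_cases hxe : 0 < x.1 e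
      · exact x.2.2 e f hxe hfe
      · have : e ∈ outEdges (fullEdges x) := by
          by_contra h
          rw [hψn t e h] at he
          exact hxe he
        exact this.1 hfe
    rw [hψn t f fun h => h.2 _ hfI]
    exact hfI
  refine ⟨fun t => ⟨ψ t, hmem t⟩, ?_, ?_, ?_⟩
  · refine Continuous.subtype_mk (continuous_pi fun c => ?_) _
    by_cases h : ∃ i, j i = c
    · obtain ⟨i, rfl⟩ := h
      simp only [hψj]
      have : Continuous Real.sigmoid := by fun_prop
      fun_prop
    · simp only [ψ, dif_neg h]
      exact continuous_const
  · intro t t' h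
    ext i
    have h1 := congrFun (congrArg Subtype.val h) (j i)
    simp only [hψj] at h1
    exact Real.sigmoid_injective (mul_left_cancel₀ hδ0.ne' (add_left_cancel h1))
  · intro t
    refine hball ?_
    rw [Metric.mem_ball, Subtype.dist_eq]
    refine lt_of_le_of_lt ((dist_pi_le_iff hδ0.le).2 fun c => ?_) hδε
    exact (hψ01 t c).2

lemma hasLocalCell_iff (hF : IsForest F) (hB : IsBranching F) {n : ℕ} {x : cellComplex F} :
    HasLocalCell n x ↔ n ≤ (outEdges (fullEdges x)).ncard :=
  ⟨fun h => h.le_ncard hF hB, hasLocalCell_of_le_ncard⟩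

lemma sameStratum_iff (hF : IsForest F) (hB : IsBranching F) {x y : cellComplex F} :
    SameStratum x y ↔ fullEdges x = fullEdges y := by
  constructor
  · rintro ⟨S, hS, hx, hy, hd⟩
    have hd' : ∀ z ∈ S, (outEdges (fullEdges z)).ncard = (outEdges (fullEdges x)).ncard := by
      intro z hz
      have := hd z hz
      simp only [hasLocalCell_iff hF hB] at this
      exact le_antisymm ((this _).1 le_rfl) ((this _).2 le_rfl)
    have hloc : ∀ z ∈ S, ∀ᶠ w in 𝓝[S] z, fullEdges w = fullEdges z := by
      intro z hz
      filter_upwards [mem_nhdsWithin_of_mem_nhds (eventually_fullEdges_le z),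
        self_mem_nhdsWithin] with w hw hwS
      by_contra hne
      have := ncard_outEdges_strictMono hF hB (lt_of_le_of_ne hw hne)
      simp only [hd' z hz, hd' w hwS] at this
      exact lt_irrefl _ this
    let : TopologicalSpace (LowerSet (InnerEdge F)) := ⊥
    have : DiscreteTopology (LowerSet (InnerEdge F)) := ⟨rfl⟩
    have hcont : ContinuousOn fullEdges S := by
      intro z hz
      rw [ContinuousWithinAt, nhds_discrete, Filter.tendsto_pure]
      exact hloc z hz
    exact hS.constant hcont hx hy
  · intro h
    have hmem : ∀ t ∈ Icc (0 : ℝ) 1, (1 - t) • x.1 + t • y.1 ∈ cellComplex F := by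
      intro t ht
      refine ⟨fun e => ?_, fun e f he hfe => ?_⟩
      · have h1 := x.2.1 e
        have h2 := y.2.1 e
        simp only [Pi.add_apply, Pi.smul_apply, smul_eq_mul]
        constructor <;> nlinarith [h1.1, h1.2, h2.1, h2.2, ht.1, ht.2]
      · simp only [Pi.add_apply, Pi.smul_apply, smul_eq_mul] at he ⊢
        have hf : x.1 f = 1 ∧ y.1 f = 1 := by
          have hiff : x.1 f = 1 ↔ y.1 f = 1 := by
            have : (⟨f, inner_of_lt hfe⟩ : InnerEdge F) ∈ fullEdges x ↔
              (⟨f, inner_of_lt hfe⟩ : InnerEdge F) ∈ fullEdges y := by rw [h]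
            exact this
          by_cases hxe : 0 < x.1 e
          · have := x.2.2 e f hxe hfe
            exact ⟨this, hiff.1 this⟩
          · by_cases hye : 0 < y.1 e
            · have := y.2.2 e f hye hfe
              exact ⟨hiff.2 this, this⟩
            · nlinarith [ht.1, ht.2]
        rw [hf.1, hf.2]; ring
    let γ : Icc (0 : ℝ) 1 → cellComplex F := fun t => ⟨_, hmem t t.2⟩
    have hγ : Continuous γ := by
      refine Continuous.subtype_mk ?_ _
      fun_prop
    have hfull : ∀ t, fullEdges (γ t) = fullEdges x := by
      intro t
      ext e
      simp only [SetLike.mem_coe, mem_fullEdges]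
      have hiff : x.1 e = 1 ↔ y.1 e = 1 := by
        have : e ∈ fullEdges x ↔ e ∈ fullEdges y := by rw [h]
        exact this
      have hval : (γ t).1 e = (1 - t.1) * x.1 e + t.1 * y.1 e := by simp [γ]
      rw [hval]
      constructor
      · intro h1
        by_contra hx1
        have hy1 := mt hiff.2 hx1
        have h2 := lt_of_le_of_ne (x.2.1 e).2 hx1
        have h3 := lt_of_le_of_ne (y.2.1 e).2 hy1
        have h4 := t.2.1
        have h5 := t.2.2
        have h6 := mul_nonneg (sub_nonneg.2 h5) (sub_nonneg.2 h2.le)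
        have h7 := mul_nonneg h4 (sub_nonneg.2 h3.le)
        rcases h4.eq_or_lt with h8 | h8
        · rw [← h8] at h1; linarith
        · have := mul_pos h8 (sub_pos.2 h3)
          linarith
      · intro h1
        rw [h1, hiff.1 h1]; ring
    refine ⟨range γ, isPreconnected_range hγ, ⟨0, ?_⟩, ⟨1, ?_⟩, ?_⟩
    · ext e; simp [γ]
    · ext e; simp [γ]
    · rintro _ ⟨t, rfl⟩ n
      rw [hasLocalCell_iff hF hB, hasLocalCell_iff hF hB, hfull]

end CellComplex

section StratumMap

variable {F G : Type*} [PartialOrder F] [PartialOrder G]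

open Classical in
/-- The subtree consisting of the inner edges in `I`. -/
noncomputable def subtreePoint (I : LowerSet (InnerEdge F)) : cellComplex F :=
  ⟨fun e => if ∃ h : ¬ IsMax e, (⟨e, h⟩ : InnerEdge F) ∈ I then 1 else 0, by
    refine ⟨fun e => ?_, fun e f he hfe => ?_⟩
    · dsimp only
      split_ifs <;> simp
    · have h : ∃ h : ¬ IsMax e, (⟨e, h⟩ : InnerEdge F) ∈ I := by
        by_contra h
        dsimp only at he
        rw [if_neg h] at he
        exact lt_irrefl _ he
      obtain ⟨h, hI⟩ := h
      exact if_pos ⟨inner_of_lt hfe, I.lower (show f ≤ e from hfe.le) hI⟩⟩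

lemma subtreePoint_of_mem {I : LowerSet (InnerEdge F)} {e : InnerEdge F} (h : e ∈ I) :
    (subtreePoint I).1 e = 1 := if_pos ⟨e.2, h⟩

lemma subtreePoint_of_notMem {I : LowerSet (InnerEdge F)} {e : F}
    (h : ∀ h : ¬ IsMax e, (⟨e, h⟩ : InnerEdge F) ∉ I) : (subtreePoint I).1 e = 0 :=
  if_neg fun ⟨h1, h2⟩ => h h1 h2

lemma fullEdges_subtreePoint (I : LowerSet (InnerEdge F)) : fullEdges (subtreePoint I) = I := by
  ext e
  simp only [SetLike.mem_coe, mem_fullEdges]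
  refine ⟨fun h => ?_, subtreePoint_of_mem⟩
  by_contra h1
  rw [subtreePoint_of_notMem fun _ => h1] at h
  exact zero_ne_one h

lemma CovBy.not_lt_of_mem_diff {α : Type*} [PartialOrder α] {I J : LowerSet α} (h : J ⋖ I)
    {e f : α} (he : e ∉ J) (hf : f ∈ I) (hf' : f ∉ J) : ¬ e < f := by
  intro hef
  have h1 : J < J ⊔ LowerSet.Iic e := by
    refine lt_of_le_of_ne le_sup_left fun h1 => he ?_
    rw [h1]
    exact Or.inr le_rfl
  refine h.2 h1 (lt_of_le_of_ne (sup_le h.le (LowerSet.Iic_le.2 (I.lower hef.le hf))) fun h2 => ?_)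
  have : f ∈ J ⊔ LowerSet.Iic e := h2 ▸ hf
  rcases this with h3 | h3
  · exact hf' h3
  · exact hef.not_ge h3

/-- Every subtree is a limit of subtrees in the stratum below it. -/
lemma exists_tendsto_subtreePoint {I J : LowerSet (InnerEdge F)} (h : J ⋖ I) :
    ∃ y : ℕ → cellComplex F, (∀ n, fullEdges (y n) = J) ∧
      Filter.Tendsto y Filter.atTop (𝓝 (subtreePoint I)) := by
  let s : ℕ → ℝ := fun n => 1 / ((n : ℝ) + 1)
  have hs0 : ∀ n, 0 < s n := fun n => by positivity
  have hs1 : ∀ n, s n ≤ 1 := fun n => by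
    have : (0 : ℝ) ≤ n := Nat.cast_nonneg n
    exact (div_le_one (by positivity)).2 (by linarith)
  let v : ℕ → F → ℝ := fun n e => (1 - s n) * (subtreePoint I).1 e + s n * (subtreePoint J).1 e
  have hv1 : ∀ n (e : InnerEdge F), e ∈ J → v n e = 1 := fun n e he => by
    simp only [v, subtreePoint_of_mem he, subtreePoint_of_mem (h.le he)]; ring
  have hv2 : ∀ n (e : InnerEdge F), e ∈ I → e ∉ J → v n e = 1 - s n := fun n e he he' => by
    simp only [v, subtreePoint_of_mem he, subtreePoint_of_notMem fun _ => he']; ring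
  have hv3 : ∀ n (e : F), (∀ h : ¬ IsMax e, (⟨e, h⟩ : InnerEdge F) ∉ I) → v n e = 0 :=
    fun n e he => by
      simp only [v, subtreePoint_of_notMem he,
        subtreePoint_of_notMem fun h1 h2 => he h1 (h.le h2)]; ring
  have hv : ∀ n, v n ∈ cellComplex F := by
    refine fun n => ⟨fun e => ?_, fun e f he hfe => ?_⟩
    · by_cases hI : ∃ h : ¬ IsMax e, (⟨e, h⟩ : InnerEdge F) ∈ I
      · obtain ⟨hm, hI⟩ := hI
        by_cases hJ : (⟨e, hm⟩ : InnerEdge F) ∈ J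
        · simp [hv1 n ⟨e, hm⟩ hJ]
        · rw [hv2 n ⟨e, hm⟩ hI hJ]
          exact ⟨sub_nonneg.2 (hs1 n), by linarith [hs0 n]⟩
      · rw [hv3 n e fun h1 h2 => hI ⟨h1, h2⟩]
        simp
    · by_cases hI : ∃ h : ¬ IsMax e, (⟨e, h⟩ : InnerEdge F) ∈ I
      · obtain ⟨hm, hI⟩ := hI
        have hlt : (⟨f, inner_of_lt hfe⟩ : InnerEdge F) < ⟨e, hm⟩ := hfe
        by_contra hne
        have hfJ : (⟨f, inner_of_lt hfe⟩ : InnerEdge F) ∉ J := fun h => hne (hv1 n _ h)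
        by_cases hJ : (⟨e, hm⟩ : InnerEdge F) ∈ J
        · exact hfJ (J.lower hlt.le hJ)
        · exact h.not_lt_of_mem_diff hfJ hI hJ hlt
      · rw [hv3 n e fun h1 h2 => hI ⟨h1, h2⟩] at he
        exact absurd he (lt_irrefl _)
  refine ⟨fun n => ⟨v n, hv n⟩, fun n => ?_, ?_⟩
  · ext e
    simp only [SetLike.mem_coe, mem_fullEdges]
    refine ⟨fun h1 => ?_, hv1 n e⟩
    by_contra hJ
    by_cases hI : e ∈ I
    · rw [hv2 n e hI hJ] at h1
      linarith [hs0 n]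
    · rw [hv3 n e fun _ => hI] at h1
      exact zero_ne_one h1
  · rw [tendsto_subtype_rng, tendsto_pi_nhds]
    intro e
    have hs : Filter.Tendsto s Filter.atTop (𝓝 0) := tendsto_one_div_add_atTop_nhds_zero_nat
    have := ((tendsto_const_nhds (x := (1 : ℝ))).sub hs).mul_const ((subtreePoint I).1 e)
    simpa [v] using this.add (hs.mul_const ((subtreePoint J).1 e))

/-- The action of a homeomorphism on the strata. -/
noncomputable def stratumMap (h : cellComplex F ≃ₜ cellComplex G) (I : LowerSet (InnerEdge F)) :
    LowerSet (InnerEdge G) := fullEdges (h (subtreePoint I))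

variable [Fintype F] [Fintype G]

lemma fullEdges_apply (hF : IsForest F) (hBF : IsBranching F) (hG : IsForest G)
    (hBG : IsBranching G) (h : cellComplex F ≃ₜ cellComplex G) (x : cellComplex F) :
    fullEdges (h x) = stratumMap h (fullEdges x) :=
  (sameStratum_iff hG hBG).1 (((sameStratum_iff hF hBF).2 (fullEdges_subtreePoint _).symm).map h)

lemma stratumMap_monotone (hF : IsForest F) (hBF : IsBranching F) (hG : IsForest G)
    (hBG : IsBranching G) (h : cellComplex F ≃ₜ cellComplex G) : Monotone (stratumMap h) := by
  classical
  have : Fintype (LowerSet (InnerEdge F)) := Fintype.ofFinite _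
  let := Fintype.toLocallyFiniteOrder (α := LowerSet (InnerEdge F))
  rw [monotone_iff_forall_covBy]
  intro J I hJI
  obtain ⟨y, hy, hlim⟩ := exists_tendsto_subtreePoint hJI
  obtain ⟨n, hn⟩ := ((h.continuous.tendsto _).comp hlim).eventually
    (eventually_fullEdges_le (h (subtreePoint I))) |>.exists
  rw [Function.comp_apply, fullEdges_apply hF hBF hG hBG, hy] at hn
  exact hn

lemma stratumMap_symm (hF : IsForest F) (hBF : IsBranching F) (hG : IsForest G)
    (hBG : IsBranching G) (h : cellComplex F ≃ₜ cellComplex G) (I : LowerSet (InnerEdge F)) :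
    stratumMap h.symm (stratumMap h I) = I := by
  rw [stratumMap.eq_1 h, ← fullEdges_apply hG hBG hF hBF, h.symm_apply_apply,
    fullEdges_subtreePoint]

/-- A homeomorphism of complexes induces an isomorphism of the posets of strata. -/
noncomputable def stratumIso (hF : IsForest F) (hBF : IsBranching F) (hG : IsForest G)
    (hBG : IsBranching G) (h : cellComplex F ≃ₜ cellComplex G) :
    LowerSet (InnerEdge F) ≃o LowerSet (InnerEdge G) :=
  Equiv.toOrderIso
    ⟨stratumMap h, stratumMap h.symm, stratumMap_symm hF hBF hG hBG h,
      stratumMap_symm hG hBG hF hBF h.symm⟩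
    (stratumMap_monotone hF hBF hG hBG h) (stratumMap_monotone hG hBG hF hBF h.symm)

lemma ncard_outEdges_stratumIso (hF : IsForest F) (hBF : IsBranching F) (hG : IsForest G)
    (hBG : IsBranching G) (h : cellComplex F ≃ₜ cellComplex G) (I : LowerSet (InnerEdge F)) :
    (outEdges (stratumIso hF hBF hG hBG h I)).ncard = (outEdges I).ncard := by
  have key : ∀ n, n ≤ (outEdges (stratumIso hF hBF hG hBG h I)).ncard ↔
      n ≤ (outEdges I).ncard := by
    intro n
    have h1 := hasLocalCell_map_iff (n := n) (z := subtreePoint I) h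
    rw [hasLocalCell_iff hG hBG, hasLocalCell_iff hF hBF, fullEdges_subtreePoint] at h1
    exact h1
  exact le_antisymm ((key _).1 le_rfl) ((key _).2 le_rfl)

end StratumMap

section Combinatorics

lemma OrderIso.supIrred_apply {α β : Type*} [SemilatticeSup α] [SemilatticeSup β] (Φ : α ≃o β)
    {a : α} (ha : SupIrred a) : SupIrred (Φ a) := by
  refine ⟨fun h => ha.1 (Φ.isMin_apply.1 h), fun b c hbc => ?_⟩
  have h : Φ.symm b ⊔ Φ.symm c = a := by rw [← Φ.symm.map_sup, hbc, Φ.symm_apply_apply]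
  exact (ha.2 h).imp (fun h => by rw [← h, Φ.apply_symm_apply])
    fun h => by rw [← h, Φ.apply_symm_apply]

/-- An isomorphism of lattices of lower sets comes from an isomorphism of posets. -/
lemma exists_orderIso_of_lowerSet {α β : Type*} [PartialOrder α] [PartialOrder β] [Finite α]
    [Finite β] (Φ : LowerSet α ≃o LowerSet β) :
    ∃ φ : α ≃o β, ∀ e I, φ e ∈ Φ I ↔ e ∈ I := by
  have h1 : ∀ e, ∃ e', LowerSet.Iic e' = Φ (LowerSet.Iic e) := fun e =>
    LowerSet.supIrred_iff_of_finite.1 (Φ.supIrred_apply (LowerSet.supIrred_Iic e))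
  have h2 : ∀ e, ∃ e', LowerSet.Iic e' = Φ.symm (LowerSet.Iic e) := fun e =>
    LowerSet.supIrred_iff_of_finite.1 (Φ.symm.supIrred_apply (LowerSet.supIrred_Iic e))
  choose f hf using h1
  choose g hg using h2
  refine ⟨⟨⟨f, g, fun e => ?_, fun e => ?_⟩, fun {a b} => ?_⟩, fun e I => ?_⟩
  · apply LowerSet.Iic_injective
    rw [hg, hf, Φ.symm_apply_apply]
  · apply LowerSet.Iic_injective
    rw [hf, hg, Φ.apply_symm_apply]
  · have : LowerSet.Iic a ≤ LowerSet.Iic b ↔ LowerSet.Iic (f a) ≤ LowerSet.Iic (f b) := by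
      rw [← Φ.le_iff_le, ← hf, ← hf]
    simpa using this.symm
  · rw [← LowerSet.Iic_le, ← LowerSet.Iic_le (a := e), ← Φ.le_iff_le, ← hf]
    rfl

lemma ncard_fiber_eq_of_ncard_le_eq {α β L M : Type*} [Finite α] [Finite β] [PartialOrder L]
    [PartialOrder M] [Finite L] (Φ : L ≃o M) (s : α → L) (t : β → M)
    (h : ∀ I, {a | s a ≤ I}.ncard = {b | t b ≤ Φ I}.ncard) (J : L) :
    {a | s a = J}.ncard = {b | t b = Φ J}.ncard := by
  classical
  have := Fintype.ofFinite α
  have := Fintype.ofFinite β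
  have := Fintype.ofFinite L
  have := Fintype.ofEquiv L Φ.toEquiv
  induction J using WellFoundedLT.induction with
  | ind J ih =>
  have hlt : {a | s a < J}.ncard = {b | t b < Φ J}.ncard := by
    simp only [Set.ncard_eq_toFinset_card', Set.toFinset_ofPred]
    rw [Finset.card_eq_sum_card_fiberwise (f := s) (t := Finset.univ.filter (· < J))
      (by intro a ha; simpa using ha),
      Finset.card_eq_sum_card_fiberwise (f := t) (t := Finset.univ.filter (· < Φ J))
      (by intro a ha; simpa using ha)]
    refine Finset.sum_equiv Φ.toEquiv (by simp) fun K hK => ?_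
    have hK' : K < J := by simpa using hK
    have := ih K hK'
    simp only [Set.ncard_eq_toFinset_card', Set.toFinset_ofPred] at this
    rw [Finset.filter_filter, Finset.filter_filter]
    convert this using 2
    · ext a
      simp only [Finset.mem_filter, Finset.mem_univ, true_and]
      exact ⟨fun h => h.2, fun h => ⟨h ▸ hK', h⟩⟩
    · ext a
      simp only [Finset.mem_filter, Finset.mem_univ, true_and]
      exact ⟨fun h => h.2, fun h => ⟨h.symm ▸ Φ.lt_iff_lt.2 hK', h⟩⟩
  have hs : {a | s a ≤ J} = {a | s a < J} ∪ {a | s a = J} := by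
    ext a; exact le_iff_lt_or_eq
  have ht : {b | t b ≤ Φ J} = {b | t b < Φ J} ∪ {b | t b = Φ J} := by
    ext a; exact le_iff_lt_or_eq
  have hJ := h J
  rw [hs, ht, Set.ncard_union_eq (Set.disjoint_left.2 fun a h1 h2 => h1.ne h2),
    Set.ncard_union_eq (Set.disjoint_left.2 fun a h1 h2 => h1.ne h2), hlt] at hJ
  exact Nat.add_left_cancel hJ

variable {F G : Type*} [PartialOrder F] [PartialOrder G] [Fintype F] [Fintype G]

lemma ncard_strictBelow_eq_add (J : LowerSet (InnerEdge F)) :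
    {c : F | strictBelow c = J}.ncard = {c : InnerEdge F | strictBelow c.1 = J}.ncard +
      Nat.card {c : {c : F // IsMax c} // strictBelow c.1 = J} := by
  have h : {c : F | strictBelow c = J} =
      Subtype.val '' {c : InnerEdge F | strictBelow c.1 = J} ∪
      Subtype.val '' {c : {c : F // IsMax c} | strictBelow c.1 = J} := by
    ext c
    constructor
    · intro hc
      by_cases hm : IsMax c
      · exact Or.inr ⟨⟨c, hm⟩, hc, rfl⟩
      · exact Or.inl ⟨⟨c, hm⟩, hc, rfl⟩
    · rintro (⟨c, hc, rfl⟩ | ⟨c, hc, rfl⟩) <;> exact hc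
  rw [h, Set.ncard_union_eq, Set.ncard_image_of_injective _ Subtype.val_injective,
    Set.ncard_image_of_injective _ Subtype.val_injective]
  · rfl
  · rw [Set.disjoint_left]
    rintro _ ⟨c, -, rfl⟩ ⟨d, -, h⟩
    exact c.2 (h ▸ d.2)

/-- A forest is determined by the lattice of its finite subtrees together with the numbers
of edges leaving them. -/
lemma exists_orderIso_of_outEdges (Φ : LowerSet (InnerEdge F) ≃o LowerSet (InnerEdge G))
    (h : ∀ I, (outEdges (Φ I)).ncard = (outEdges I).ncard) : Nonempty (F ≃o G) := by
  classical
  obtain ⟨φ, hφ⟩ := exists_orderIso_of_lowerSet Φ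
  have hcard : ∀ I, ((Φ I : LowerSet _) : Set (InnerEdge G)).ncard =
      (I : Set (InnerEdge F)).ncard := by
    intro I
    rw [← Set.ncard_image_of_injective _ φ.injective]
    congr 1
    ext g
    obtain ⟨e, rfl⟩ := φ.surjective g
    simp [hφ]
  have hle : ∀ I, {c : F | strictBelow c ≤ I}.ncard = {c : G | strictBelow c ≤ Φ I}.ncard := by
    intro I
    rw [← ncard_outEdges_add, ← ncard_outEdges_add, h, hcard]
  have hfib := ncard_fiber_eq_of_ncard_le_eq Φ _ _ hle
  have hsb : ∀ c : InnerEdge F, strictBelow (φ c).1 = Φ (strictBelow c.1) := by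
    intro c
    ext g
    obtain ⟨e, rfl⟩ := φ.surjective g
    simp only [SetLike.mem_coe, hφ, mem_strictBelow]
    exact φ.lt_iff_lt
  have hmax : ∀ J : LowerSet (InnerEdge G),
      Nat.card {c : {c : F // IsMax c} // Φ (strictBelow c.1) = J} =
      Nat.card {c : {c : G // IsMax c} // strictBelow c.1 = J} := by
    intro J
    obtain ⟨I, rfl⟩ := Φ.surjective J
    have h1 := hfib I
    rw [ncard_strictBelow_eq_add, ncard_strictBelow_eq_add,
      ← Set.ncard_image_of_injective _ φ.injective] at h1
    have h2 : φ '' {c : InnerEdge F | strictBelow c.1 = I} =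
        {c : InnerEdge G | strictBelow c.1 = Φ I} := by
      ext g
      obtain ⟨e, rfl⟩ := φ.surjective g
      simp [hsb]
    rw [h2] at h1
    simpa using Nat.add_left_cancel h1
  let ψm : {c : F // IsMax c} ≃ {c : G // IsMax c} := Equiv.ofFiberEquiv
    (f := fun c => Φ (strictBelow c.1)) (g := fun c => strictBelow c.1)
    fun J => ((Finite.card_eq).1 (hmax J)).some
  have hψm : ∀ c, strictBelow (ψm c).1 = Φ (strictBelow c.1) := fun c =>
    Equiv.ofFiberEquiv_map (f := fun c : {c : F // IsMax c} => Φ (strictBelow c.1))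
      (g := fun c : {c : G // IsMax c} => strictBelow c.1) _ c
  let ψ : F ≃ G := (Equiv.sumCompl fun c : F => IsMax c).symm.trans
    ((Equiv.sumCongr ψm φ.toEquiv).trans (Equiv.sumCompl fun c : G => IsMax c))
  have hψ1 : ∀ c : {c : F // IsMax c}, ψ c = ψm c := fun c => by simp [ψ]
  have hψ2 : ∀ c : InnerEdge F, ψ c = φ c := fun c => by simp [ψ]
  have hψ : ∀ c, strictBelow (ψ c) = Φ (strictBelow c) := by
    intro c
    by_cases hm : IsMax c
    · rw [hψ1 ⟨c, hm⟩, hψm]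
    · rw [hψ2 ⟨c, hm⟩, hsb]
  have hlt : ∀ a b, ψ a < ψ b ↔ a < b := by
    intro a b
    by_cases hm : IsMax a
    · have h1 := (ψm ⟨a, hm⟩).2
      rw [← hψ1 ⟨a, hm⟩] at h1
      exact ⟨fun h => absurd h h1.not_lt, fun h => absurd h hm.not_lt⟩
    · rw [hψ2 ⟨a, hm⟩, ← mem_strictBelow, hψ, hφ, mem_strictBelow]
  exact ⟨⟨ψ, fun {a b} => by rw [le_iff_lt_or_eq, le_iff_lt_or_eq, hlt, ψ.apply_eq_iff_eq]⟩⟩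

/-- The complex of a branching forest determines the forest. -/
theorem exists_orderIso_of_homeomorph (hF : IsForest F) (hBF : IsBranching F) (hG : IsForest G)
    (hBG : IsBranching G) (h : cellComplex F ≃ₜ cellComplex G) : Nonempty (F ≃o G) :=
  exists_orderIso_of_outEdges (stratumIso hF hBF hG hBG h)
    (ncard_outEdges_stratumIso hF hBF hG hBG h)

end Combinatorics

section Realization

variable {F : Type*} [PartialOrder F]

lemma isClosed_cellComplex : IsClosed (cellComplex F) := by
  have h : cellComplex F = (⋂ e, {x : F → ℝ | x e ∈ Icc (0 : ℝ) 1}) ∩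
      ⋂ e, ⋂ f, ⋂ _ : f < e, ({x : F → ℝ | x e ≤ 0} ∪ {x | x f = 1}) := by
    ext x
    simp only [cellComplex, mem_ofPred_eq, mem_inter_iff, mem_iInter, mem_union]
    refine and_congr_right fun _ => ⟨fun h e f hfe => ?_, fun h e f he hfe => ?_⟩
    · exact (le_or_gt (x e) 0).imp id fun he => h e f he hfe
    · exact (h e f hfe).resolve_left (not_le.2 he)
  rw [h]
  refine (isClosed_iInter fun e => isClosed_Icc.preimage (continuous_apply e)).inter ?_
  refine isClosed_iInter fun e => isClosed_iInter fun f => isClosed_iInter fun _ => ?_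
  exact (isClosed_le (continuous_apply e) continuous_const).union
    (isClosed_eq (continuous_apply f) continuous_const)

lemma isCompact_cellComplex : IsCompact (cellComplex F) :=
  (isCompact_univ_pi fun _ => isCompact_Icc).of_isClosed_subset isClosed_cellComplex
    fun _ hx e _ => hx.1 e

lemma isClosed_realization : IsClosed (realization F) := by
  have h : realization F = cellComplex F ∩
      ⋂ e, ⋂ f, ⋂ _ : ¬ (e ≤ f ∨ f ≤ e), ({x : F → ℝ | x e ≤ 0} ∪ {x | x f ≤ 0}) := by
    ext x
    simp only [realization, mem_ofPred_eq, mem_inter_iff, mem_iInter, mem_union]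
    refine and_congr_right fun _ => ⟨fun h e f hfe => ?_, fun h e f he hf => ?_⟩
    · by_contra hn
      push Not at hn
      exact hfe (h e f hn.1 hn.2)
    · by_contra hn
      rcases h e f hn with h | h <;> linarith
  rw [h]
  refine isClosed_cellComplex.inter ?_
  refine isClosed_iInter fun e => isClosed_iInter fun f => isClosed_iInter fun _ => ?_
  exact (isClosed_le (continuous_apply e) continuous_const).union
    (isClosed_le (continuous_apply f) continuous_const)

lemma isCompact_realization : IsCompact (realization F) :=
  isCompact_cellComplex.of_isClosed_subset isClosed_realization fun _ hx => hx.1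

instance : CompactSpace (realization F) := isCompact_iff_compactSpace.1 isCompact_realization

instance : CompactSpace (cellComplex F) := isCompact_iff_compactSpace.1 isCompact_cellComplex

lemma zero_mem_realization : (0 : F → ℝ) ∈ realization F :=
  ⟨⟨fun _ => by simp, fun _ _ h => absurd h (lt_irrefl _)⟩, fun _ _ h => absurd h (lt_irrefl _)⟩

instance : Zero (realization F) := ⟨⟨0, zero_mem_realization⟩⟩

lemma inf_mem_realization {x y : F → ℝ} (hx : x ∈ realization F) (hy : y ∈ cellComplex F) :
    x ⊓ y ∈ realization F := by
  have h : ∀ e, 0 < (x ⊓ y) e → 0 < x e ∧ 0 < y e := fun e he => lt_inf_iff.1 he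
  refine ⟨⟨fun e => ⟨le_inf (hx.1.1 e).1 (hy.1 e).1, inf_le_left.trans (hx.1.1 e).2⟩,
    fun e f he hfe => ?_⟩, fun e f he hf => hx.2 e f (h e he).1 (h f hf).1⟩
  rw [Pi.inf_apply, hx.1.2 e f (h e he).1 hfe, hy.2 e f (h e he).2 hfe, inf_idem]

/-- The subset of the realization described by a point of the complex. -/
def subtreeSet (k : cellComplex F) : Set (realization F) := {x | x.1 ≤ k.1}

lemma zero_mem_subtreeSet (k : cellComplex F) : 0 ∈ subtreeSet k := fun e => (k.2.1 e).1

lemma isClosed_subtreeSet (k : cellComplex F) : IsClosed (subtreeSet k) :=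
  isClosed_le continuous_subtype_val continuous_const

open Classical in
/-- The point at height `s` of the edge `e`. -/
noncomputable def edgePoint (e : F) (s : ℝ) : F → ℝ :=
  fun f => if f < e then 1 else if f = e then s else 0

@[simp] lemma edgePoint_self (e : F) (s : ℝ) : edgePoint e s e = s := by simp [edgePoint]

lemma edgePoint_of_lt {e f : F} (h : f < e) (s : ℝ) : edgePoint e s f = 1 := if_pos h

lemma le_of_edgePoint_pos {e f : F} {s : ℝ} (h : 0 < edgePoint e s f) : f ≤ e := by
  unfold edgePoint at h
  split_ifs at h with h1 h2
  · exact h1.le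
  · exact h2.le
  · exact absurd h (lt_irrefl _)

lemma edgePoint_mem (hF : IsForest F) (e : F) {s : ℝ} (hs : s ∈ Icc (0 : ℝ) 1) :
    edgePoint e s ∈ realization F := by
  refine ⟨⟨fun f => ?_, fun f g hf hgf => ?_⟩, fun f g hf hg => ?_⟩
  · unfold edgePoint
    split_ifs
    · simp
    · exact hs
    · simp
  · exact edgePoint_of_lt (hgf.trans_le (le_of_edgePoint_pos hf)) s
  · exact hF f g e (le_of_edgePoint_pos hf) (le_of_edgePoint_pos hg)

lemma eq_edgePoint {x : F → ℝ} (hx : x ∈ realization F) {e : F} (he : 0 < x e)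
    (hmax : ∀ f, e < f → x f ≤ 0) : x = edgePoint e (x e) := by
  funext f
  by_cases h1 : f < e
  · rw [edgePoint_of_lt h1, hx.1.2 e f he h1]
  by_cases h2 : f = e
  · rw [h2, edgePoint_self]
  rw [edgePoint, if_neg h1, if_neg h2]
  refine le_antisymm (not_lt.1 fun hf => ?_) (hx.1.1 f).1
  rcases hx.2 e f he hf with h | h
  · exact (hmax f (lt_of_le_of_ne h (Ne.symm h2))).not_gt hf
  · exact h1 (lt_of_le_of_ne h h2)

lemma eq_edgePoint_of_lt_one {x : F → ℝ} (hx : x ∈ realization F) {e : F} (he : 0 < x e)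
    (he1 : x e < 1) : x = edgePoint e (x e) :=
  eq_edgePoint hx he fun f hef => not_lt.1 fun hf => he1.ne (hx.1.2 f e hf hef)

lemma subtreeSet_subset_iff (hF : IsForest F) {k l : cellComplex F} :
    subtreeSet k ⊆ subtreeSet l ↔ k.1 ≤ l.1 := by
  refine ⟨fun h e => ?_, fun h x hx => le_trans hx h⟩
  rcases (k.2.1 e).1.eq_or_lt with h0 | h0
  · rw [← h0]
    exact (l.2.1 e).1
  have hmem : (⟨edgePoint e (k.1 e), edgePoint_mem hF e (k.2.1 e)⟩ : realization F) ∈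
      subtreeSet k := by
    intro f
    show edgePoint e (k.1 e) f ≤ k.1 f
    unfold edgePoint
    split_ifs with h1 h2
    · exact (k.2.2 e f h0 h1).ge
    · rw [h2]
    · exact (k.2.1 f).1
  have := h hmem e
  simpa using this

section Finite

variable [Fintype F]

lemma isConnected_subtreeSet (k : cellComplex F) : IsConnected (subtreeSet k) := by
  classical
  let d : F → ℝ := fun e => ({f : F | f < e}.ncard : ℝ)
  have hd0 : ∀ e, 0 ≤ d e := fun e => Nat.cast_nonneg _
  have hd : ∀ e f, f < e → d f + 1 ≤ d e := by
    intro e f h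
    have : {g : F | g < f}.ncard < {g : F | g < e}.ncard :=
      Set.ncard_lt_ncard ⟨fun g hg => lt_trans hg h, fun hs => lt_irrefl f (hs h)⟩
    show ((_ : ℕ) : ℝ) + 1 ≤ ((_ : ℕ) : ℝ)
    exact_mod_cast this
  have hdN : ∀ e, d e ≤ Fintype.card F := by
    intro e
    have : {g : F | g < e}.ncard ≤ Fintype.card F := by
      rw [← Nat.card_eq_fintype_card, ← Set.ncard_univ]
      exact Set.ncard_le_ncard (subset_univ _)
    show ((_ : ℕ) : ℝ) ≤ _
    exact_mod_cast this
  let g : ℝ → F → ℝ := fun t e => max 0 (min 1 (t - d e))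
  have hg : ∀ t, g t ∈ cellComplex F := by
    refine fun t => ⟨fun e => ⟨le_max_left _ _, max_le zero_le_one (min_le_left _ _)⟩,
      fun e f he hfe => ?_⟩
    have h1 : 0 < t - d e := by
      rcases lt_max_iff.1 he with h | h
      · exact absurd h (lt_irrefl _)
      · exact (lt_min_iff.1 h).2
    have h2 := hd e f hfe
    show max 0 (min 1 (t - d f)) = 1
    rw [min_eq_left (by linarith), max_eq_right zero_le_one]
  refine ⟨⟨0, zero_mem_subtreeSet k⟩, isPreconnected_of_forall 0 fun x hx => ?_⟩
  let p : ℝ → realization F := fun t => ⟨x.1 ⊓ g t, inf_mem_realization x.2 (hg t)⟩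
  have hp : Continuous p := by
    refine Continuous.subtype_mk (continuous_pi fun e => ?_) _
    show Continuous fun t => min (x.1 e) (max 0 (min 1 (t - d e)))
    fun_prop
  refine ⟨range p, ?_, ⟨0, ?_⟩, ⟨Fintype.card F + 1, ?_⟩, isPreconnected_range hp⟩
  · rintro _ ⟨t, rfl⟩
    exact fun e => le_trans inf_le_left (hx e)
  · ext e
    show min (x.1 e) (max 0 (min 1 (0 - d e))) = 0
    rw [max_eq_left ((min_le_right _ _).trans (by linarith [hd0 e]))]
    exact min_eq_right (x.2.1.1 e).1
  · ext e
    show min (x.1 e) (max 0 (min 1 ((Fintype.card F : ℝ) + 1 - d e))) = x.1 e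
    rw [min_eq_left (a := (1 : ℝ)) (by linarith [hdN e]), max_eq_right zero_le_one]
    exact min_eq_left (x.2.1.1 e).2

/-- Every subcontinuum through the root is described by a point of the complex. -/
lemma exists_subtreeSet_eq {B : Set (realization F)} (hB : IsConnected B) (hBc : IsClosed B)
    (h0 : 0 ∈ B) : ∃ k : cellComplex F, subtreeSet k = B := by
  classical
  have hcont : ∀ e, Continuous fun x : realization F => x.1 e := fun e =>
    (continuous_apply e).comp continuous_subtype_val
  have hex : ∀ e, ∃ x ∈ B, ∀ y ∈ B, y.1 e ≤ x.1 e := fun e =>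
    hBc.isCompact.exists_isMaxOn hB.nonempty (hcont e).continuousOn
  choose m hmB hm using hex
  let k : F → ℝ := fun e => (m e).1 e
  have hk : k ∈ cellComplex F := by
    refine ⟨fun e => (m e).2.1.1 e, fun e f he hfe => ?_⟩
    refine le_antisymm ((m f).2.1.1 f).2 ?_
    rw [← (m e).2.1.2 e f he hfe]
    exact hm f _ (hmB e)
  refine ⟨⟨k, hk⟩, subset_antisymm ?_ fun x hx e => hm e x hx⟩
  -- points in the open edges
  have hopen : ∀ x ∈ subtreeSet ⟨k, hk⟩, ∀ e, 0 < x.1 e → x.1 e < 1 → x ∈ B := by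
    intro x hx e he he1
    have hiv := hB.isPreconnected.intermediate_value h0 (hmB e) (hcont e).continuousOn
    obtain ⟨y, hyB, hy⟩ := hiv ⟨he.le, hx e⟩
    dsimp only at hy
    have : x = y := by
      refine Subtype.ext ?_
      rw [eq_edgePoint_of_lt_one x.2 he he1,
        eq_edgePoint_of_lt_one y.2 (hy ▸ he) (hy ▸ he1), hy]
    rwa [this]
  intro x hx
  by_cases hall : ∃ e, 0 < x.1 e ∧ x.1 e < 1
  · obtain ⟨e, h1, h2⟩ := hall
    exact hopen x hx e h1 h2
  push Not at hall
  by_cases hzero : ∃ e, 0 < x.1 e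
  swap
  · push Not at hzero
    have : x = 0 := Subtype.ext (funext fun e => le_antisymm (hzero e) (x.2.1.1 e).1)
    rwa [this]
  obtain ⟨e, he⟩ := (Set.toFinite {e | 0 < x.1 e}).exists_maximal hzero
  have he0 : 0 < x.1 e := he.prop
  have hmax : ∀ f, e < f → ¬ 0 < x.1 f := fun f hef hf => hef.not_ge (he.le_of_ge hf hef.le)
  let s : ℕ → ℝ := fun n => 1 - 1 / ((n : ℝ) + 2)
  have hs : ∀ n, 0 < s n ∧ s n < 1 := by
    intro n
    have h1 : (0 : ℝ) ≤ n := Nat.cast_nonneg n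
    have h2 : (1 : ℝ) / (n + 2) < 1 := (div_lt_one (by linarith)).2 (by linarith)
    have h3 : (0 : ℝ) < 1 / (n + 2) := by positivity
    exact ⟨by linarith, by linarith⟩
  have hx1 : x.1 e = 1 := le_antisymm (x.2.1.1 e).2 (hall e he0)
  have hupd : ∀ n f, 0 < Function.update x.1 e (s n) f → 0 < x.1 f := by
    intro n f hf
    by_cases h : f = e
    · rw [h]; exact he0
    · rwa [Function.update_of_ne h] at hf
  have hmem : ∀ n, Function.update x.1 e (s n) ∈ realization F := by
    refine fun n => ⟨⟨fun f => ?_, fun f g hf hgf => ?_⟩, fun f g hf hg =>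
      x.2.2 f g (hupd n f hf) (hupd n g hg)⟩
    · by_cases h : f = e
      · rw [h, Function.update_self]
        exact ⟨(hs n).1.le, (hs n).2.le⟩
      · rw [Function.update_of_ne h]
        exact x.2.1.1 f
    · have hne : g ≠ e := fun h => hmax f (h ▸ hgf) (hupd n f hf)
      rw [Function.update_of_ne hne]
      exact x.2.1.2 f g (hupd n f hf) hgf
  have hle : ∀ n, Function.update x.1 e (s n) ≤ x.1 := by
    intro n
    rw [update_le_iff]
    exact ⟨hx1 ▸ (hs n).2.le, fun _ _ => le_rfl⟩
  have hB' : ∀ n, (⟨_, hmem n⟩ : realization F) ∈ B := by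
    intro n
    refine hopen _ ((hle n).trans hx) e ?_ ?_
    · simpa using (hs n).1
    · simpa using (hs n).2
  refine hBc.mem_of_tendsto (f := fun n => (⟨_, hmem n⟩ : realization F)) (b := Filter.atTop) ?_
    (Filter.Eventually.of_forall hB')
  rw [tendsto_subtype_rng]
  have hlim : Filter.Tendsto s Filter.atTop (𝓝 (x.1 e)) := by
    have h1 : Filter.Tendsto (fun n : ℕ => 1 / (((n + 1 : ℕ) : ℝ) + 1)) Filter.atTop (𝓝 0) :=
      (tendsto_one_div_add_atTop_nhds_zero_nat (𝕜 := ℝ)).comp (Filter.tendsto_add_atTop_nat 1)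
    have h2 := (tendsto_const_nhds (x := (1 : ℝ))).sub h1
    rw [sub_zero] at h2
    rw [hx1]
    refine h2.congr fun n => ?_
    simp only [s]
    push_cast
    ring
  have := (tendsto_const_nhds (x := x.1)).update e hlim
  simpa using this

/-- The subtrees as elements of the hyperspace of the realization. -/
def subtreeCompacts (k : cellComplex F) : NonemptyCompacts (realization F) :=
  ⟨⟨subtreeSet k, (isClosed_subtreeSet k).isCompact⟩, ⟨0, zero_mem_subtreeSet k⟩⟩

lemma continuous_subtreeCompacts : Continuous (subtreeCompacts (F := F)) := by
  refine (LipschitzWith.of_dist_le_mul (K := 1) fun k l => ?_).continuous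
  rw [Metric.NonemptyCompacts.dist_eq, NNReal.coe_one, one_mul]
  have key : ∀ k l : cellComplex F, ∀ x ∈ subtreeSet k, ∃ y ∈ subtreeSet l,
      dist x y ≤ dist k l := by
    intro k l x hx
    refine ⟨⟨x.1 ⊓ l.1, inf_mem_realization x.2 l.2⟩, fun _ => inf_le_right, ?_⟩
    rw [Subtype.dist_eq, dist_pi_le_iff dist_nonneg]
    intro e
    have h1 : dist (k.1 e) (l.1 e) ≤ dist k l := dist_le_pi_dist k.1 l.1 e
    have h2 := hx e
    refine le_trans ?_ h1
    show |x.1 e - min (x.1 e) (l.1 e)| ≤ |k.1 e - l.1 e|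
    rcases le_total (x.1 e) (l.1 e) with h | h
    · rw [min_eq_left h, sub_self, abs_zero]
      exact abs_nonneg _
    · rw [min_eq_right h, abs_of_nonneg (by linarith), abs_of_nonneg (by linarith)]
      linarith
  exact Metric.hausdorffDist_le_of_mem_dist dist_nonneg (key k l) fun x hx =>
    dist_comm k l ▸ key l k x hx

/-- The hyperspace of a rooted tree is homeomorphic to the complex of its forest of edges. -/
theorem nonempty_homeomorph_CP (hF : IsForest F) {X : Type*} [MetricSpace X]
    (ψ : realization F ≃ₜ X) : Nonempty (cellComplex F ≃ₜ CP X (ψ 0)) := by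
  let Θ : cellComplex F → CP X (ψ 0) := fun k =>
    ⟨(subtreeCompacts k).map ψ ψ.continuous,
      by rw [NonemptyCompacts.coe_map]
         exact (isConnected_subtreeSet k).image _ ψ.continuous.continuousOn,
      by rw [NonemptyCompacts.coe_map]
         exact ⟨0, zero_mem_subtreeSet k, rfl⟩⟩
  have hset : ∀ k, ((Θ k).1 : Set X) = ψ '' subtreeSet k := fun k => NonemptyCompacts.coe_map _ _
  have hc : Continuous Θ :=
    Continuous.subtype_mk (ψ.continuous.nonemptyCompacts_map.comp continuous_subtreeCompacts) _
  have hi : Function.Injective Θ := by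
    intro k l h
    have h1 : ψ '' subtreeSet k = ψ '' subtreeSet l := by rw [← hset, ← hset, h]
    have h2 := ψ.injective.image_injective h1
    exact Subtype.ext (le_antisymm ((subtreeSet_subset_iff hF).1 h2.subset)
      ((subtreeSet_subset_iff hF).1 h2.superset))
  have hs : Function.Surjective Θ := by
    intro A
    have hAc : IsClosed (A.1 : Set X) := A.1.isCompact.isClosed
    obtain ⟨k, hk⟩ := exists_subtreeSet_eq (B := ψ ⁻¹' A.1) (ψ.isConnected_preimage.2 A.2.1)
      (hAc.preimage ψ.continuous) A.2.2
    refine ⟨k, Subtype.ext (SetLike.coe_injective ?_)⟩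
    rw [hset, hk, image_preimage_eq _ ψ.surjective]
  exact ⟨Continuous.homeoOfEquivCompactToT2 (f := Equiv.ofBijective Θ ⟨hi, hs⟩) hc⟩

end Finite

variable {G : Type*} [PartialOrder G]

lemma comp_mem_realization (φ : G ≃o F) {x : F → ℝ} (hx : x ∈ realization F) :
    x ∘ φ ∈ realization G :=
  ⟨⟨fun e => hx.1.1 _, fun _ _ he hfe => hx.1.2 _ _ he (φ.lt_iff_lt.2 hfe)⟩,
    fun e f he hf => by simpa using hx.2 (φ e) (φ f) he hf⟩

/-- Isomorphic forests have homeomorphic realizations. -/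
def realizationCongr (φ : F ≃o G) : realization F ≃ₜ realization G where
  toFun x := ⟨x.1 ∘ φ.symm, comp_mem_realization φ.symm x.2⟩
  invFun x := ⟨x.1 ∘ φ, comp_mem_realization φ x.2⟩
  left_inv x := by ext; simp
  right_inv x := by ext; simp
  continuous_toFun := by
    refine Continuous.subtype_mk (continuous_pi fun e => ?_) _
    exact (continuous_apply _).comp continuous_subtype_val
  continuous_invFun := by
    refine Continuous.subtype_mk (continuous_pi fun e => ?_) _
    exact (continuous_apply _).comp continuous_subtype_val

lemma realizationCongr_zero (φ : F ≃o G) : realizationCongr φ 0 = 0 := rfl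

end Realization

section Merge

variable {F : Type*} [PartialOrder F]

lemma continuous_realization_apply (e : F) : Continuous fun x : realization F => x.1 e :=
  (continuous_apply e).comp continuous_subtype_val

open Classical in
/-- Merge the edge `c` into the edge `e`. -/
noncomputable def mergeEdge (e c : F) (x : F → ℝ) : {f // f ≠ c} → ℝ :=
  fun g => if g.1 = e then (x e + x c) / 2 else x g

open Classical in
/-- Split the edge `e`, the upper half becoming the edge `c`. -/
noncomputable def splitEdge {e c : F} (hec : e < c) (y : {f // f ≠ c} → ℝ) : F → ℝ :=
  fun f => if h : f = c then max (2 * y ⟨e, hec.ne⟩ - 1) 0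
    else if f = e then min (2 * y ⟨e, hec.ne⟩) 1 else y ⟨f, h⟩

variable {e c : F}

lemma mergeEdge_mem (hec : e < c) (hcov : ∀ f, e < f → c ≤ f) {x : F → ℝ}
    (hx : x ∈ realization F) : mergeEdge e c x ∈ realization {f // f ≠ c} := by
  have hpos : ∀ g : {f // f ≠ c}, 0 < mergeEdge e c x g → 0 < x g := by
    intro g hg
    unfold mergeEdge at hg
    split_ifs at hg with h
    · rw [h]
      rcases (hx.1.1 c).1.eq_or_lt with h0 | h0
      · rw [← h0] at hg; linarith
      · rw [hx.1.2 c e h0 hec]; exact one_pos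
    · exact hg
  refine ⟨⟨fun g => ?_, fun g h hg hgh => ?_⟩, fun g h hg hh => hx.2 g h (hpos g hg) (hpos h hh)⟩
  · unfold mergeEdge
    have h1 := hx.1.1 e
    have h2 := hx.1.1 c
    split_ifs with h
    · exact ⟨by linarith [h1.1, h2.1], by linarith [h1.2, h2.2]⟩
    · exact hx.1.1 g
  · have h1 : x h = 1 := hx.1.2 g h (hpos g hg) hgh
    unfold mergeEdge
    split_ifs with he
    · have hcg : c < g.1 := lt_of_le_of_ne (hcov g (he ▸ hgh)) g.2.symm
      rw [← he, h1, hx.1.2 g c (hpos g hg) hcg]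
      norm_num
    · exact h1

lemma splitEdge_self (hec : e < c) (y : {f // f ≠ c} → ℝ) :
    splitEdge hec y c = max (2 * y ⟨e, hec.ne⟩ - 1) 0 := by simp [splitEdge]

lemma splitEdge_left (hec : e < c) (y : {f // f ≠ c} → ℝ) :
    splitEdge hec y e = min (2 * y ⟨e, hec.ne⟩) 1 := by simp [splitEdge, hec.ne]

lemma splitEdge_of_ne (hec : e < c) (y : {f // f ≠ c} → ℝ) {f : F} (h1 : f ≠ c) (h2 : f ≠ e) :
    splitEdge hec y f = y ⟨f, h1⟩ := by simp [splitEdge, h1, h2]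

lemma splitEdge_mem (hF : IsForest F) (hec : e < c) (hcov : ∀ f, e < f → c ≤ f)
    {y : {f // f ≠ c} → ℝ} (hy : y ∈ realization {f // f ≠ c}) :
    splitEdge hec y ∈ realization F := by
  have hye := hy.1.1 ⟨e, hec.ne⟩
  have hpos : ∀ f (h : f ≠ c), 0 < splitEdge hec y f → 0 < y ⟨f, h⟩ := by
    intro f h hf
    by_cases he : f = e
    · subst he
      rw [splitEdge_left] at hf
      linarith [(lt_min_iff.1 hf).1]
    · rwa [splitEdge_of_ne hec y h he] at hf
  have hposc : 0 < splitEdge hec y c → 1 / 2 < y ⟨e, hec.ne⟩ := by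
    intro h
    rw [splitEdge_self] at h
    rcases lt_max_iff.1 h with h | h
    · linarith
    · exact absurd h (lt_irrefl _)
  have hone : ∀ f (h : f ≠ c), y ⟨f, h⟩ = 1 → splitEdge hec y f = 1 := by
    intro f h hf
    by_cases he : f = e
    · subst he
      rw [splitEdge_left, hf]; norm_num
    · rwa [splitEdge_of_ne hec y h he]
  have hbelow : ∀ g, g < c → g ≤ e := by
    intro g hg
    rcases hF g e c hg.le hec.le with h | h
    · exact h
    · rcases h.eq_or_lt with h | h
      · exact h.ge
      · exact absurd hg (hcov g h).not_gt
  refine ⟨⟨fun f => ?_, fun f g hf hgf => ?_⟩, ?_⟩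
  · by_cases h1 : f = c
    · rw [h1, splitEdge_self]
      exact ⟨le_max_right _ _, max_le (by linarith [hye.2]) zero_le_one⟩
    by_cases h2 : f = e
    · rw [h2, splitEdge_left]
      exact ⟨le_min (by linarith [hye.1]) zero_le_one, min_le_right _ _⟩
    rw [splitEdge_of_ne hec y h1 h2]
    exact hy.1.1 _
  · by_cases h1 : f = c
    · subst h1
      have h3 := hposc hf
      rcases (hbelow g hgf).eq_or_lt with h | h
      · rw [h, splitEdge_left, min_eq_right (by linarith)]
      · exact hone g hgf.ne (hy.1.2 ⟨e, hec.ne⟩ ⟨g, hgf.ne⟩ (by linarith) h)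
    · have h3 := hpos f h1 hf
      by_cases h2 : g = c
      · subst h2
        rw [splitEdge_self, hy.1.2 ⟨f, h1⟩ ⟨e, hec.ne⟩ h3 (hec.trans hgf)]
        norm_num
      · exact hone g h2 (hy.1.2 ⟨f, h1⟩ ⟨g, h2⟩ h3 hgf)
  · have hcomp : ∀ g (h : g ≠ c), 0 < splitEdge hec y c → 0 < splitEdge hec y g →
        c ≤ g ∨ g ≤ c := by
      intro g h h1 h2
      rcases hy.2 ⟨e, hec.ne⟩ ⟨g, h⟩ (by linarith [hposc h1]) (hpos g h h2) with h3 | h3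
      · rcases (show e ≤ g from h3).eq_or_lt with h4 | h4
        · exact Or.inr (h4 ▸ hec.le)
        · exact Or.inl (hcov g h4)
      · exact Or.inr (le_trans (show g ≤ e from h3) hec.le)
    intro f g hf hg
    by_cases h1 : f = c
    · by_cases h2 : g = c
      · exact Or.inl (h1.trans h2.symm).le
      · subst h1
        exact hcomp g h2 hf hg
    · by_cases h2 : g = c
      · subst h2
        exact (hcomp f h1 hg hf).symm
      · exact hy.2 ⟨f, h1⟩ ⟨g, h2⟩ (hpos f h1 hf) (hpos g h2 hg)

/-- An edge which is the only upper cover of another one can be removed. -/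
lemma exists_homeomorph_merge (hF : IsForest F) (hec : e < c) (hcov : ∀ f, e < f → c ≤ f) :
    ∃ h : realization F ≃ₜ realization {f // f ≠ c}, h 0 = 0 := by
  refine ⟨⟨⟨fun x => ⟨_, mergeEdge_mem hec hcov x.2⟩, fun y => ⟨_, splitEdge_mem hF hec hcov y.2⟩,
    fun x => ?_, fun y => ?_⟩, ?_, ?_⟩, ?_⟩
  · refine Subtype.ext (funext fun f => ?_)
    have h1 := x.2.1.1 e
    have h2 := x.2.1.1 c
    have h3 := x.2.1.2 c e
    by_cases hc : f = c
    · rw [hc]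
      simp only [splitEdge_self, mergeEdge, if_true]
      rcases h2.1.eq_or_lt with h0 | h0
      · rw [← h0, max_eq_right]
        linarith [h1.2]
      · rw [h3 h0 hec, max_eq_left] <;> linarith
    by_cases he : f = e
    · rw [he]
      simp only [splitEdge_left, mergeEdge, if_true]
      rcases h2.1.eq_or_lt with h0 | h0
      · rw [← h0, min_eq_left] <;> linarith [h1.2]
      · rw [h3 h0 hec, min_eq_right]
        linarith
    · simp [splitEdge_of_ne hec _ hc he, mergeEdge, he]
  · refine Subtype.ext (funext fun g => ?_)
    by_cases he : g.1 = e
    · have hg : g = ⟨e, hec.ne⟩ := Subtype.ext he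
      subst hg
      simp only [mergeEdge, if_true, splitEdge_left, splitEdge_self]
      rcases le_total (2 * y.1 ⟨e, hec.ne⟩) 1 with h | h
      · rw [min_eq_left h, max_eq_right (by linarith)]; linarith
      · rw [min_eq_right h, max_eq_left (by linarith)]; linarith
    · simp [mergeEdge, he, splitEdge_of_ne hec _ g.2 he]
  · refine Continuous.subtype_mk (continuous_pi fun g => ?_) _
    unfold mergeEdge
    split_ifs
    · exact ((continuous_realization_apply e).add (continuous_realization_apply c)).div_const 2
    · exact continuous_realization_apply g.1
  · refine Continuous.subtype_mk (continuous_pi fun f => ?_) _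
    have h1 := (continuous_realization_apply (F := {f // f ≠ c}) ⟨e, hec.ne⟩).const_mul 2
    unfold splitEdge
    split_ifs with h
    · exact (h1.sub continuous_const).max continuous_const
    · exact h1.min continuous_const
    · exact continuous_realization_apply (F := {f // f ≠ c}) ⟨f, h⟩
  · refine Subtype.ext (funext fun g => ?_)
    show mergeEdge e c 0 g = 0
    simp [mergeEdge]

lemma IsForest.subtype (hF : IsForest F) (P : F → Prop) : IsForest {f // P f} :=
  fun a b c hac hbc => hF a b c hac hbc

end Merge

/-- Every forest can be replaced by a branching one with the same realization. -/
lemma exists_isBranching (F : Type) [Fintype F] [PartialOrder F] (hF : IsForest F) :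
    ∃ (G : Type) (_ : Fintype G) (_ : PartialOrder G), IsForest G ∧ IsBranching G ∧
      ∃ h : realization F ≃ₜ realization G, h 0 = 0 := by
  classical
  induction hn : Fintype.card F using Nat.strong_induction_on generalizing F with
  | _ n ih =>
  by_cases hB : IsBranching F
  · exact ⟨F, inferInstance, inferInstance, hF, hB, Homeomorph.refl _, rfl⟩
  · simp only [IsBranching] at hB
    push Not at hB
    obtain ⟨e, c, hec, hcov⟩ := hB
    obtain ⟨h, h0⟩ := exists_homeomorph_merge hF hec hcov
    have hlt : Fintype.card {f // f ≠ c} < n := hn ▸ Fintype.card_subtype_lt (x := c) (by simp)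
    obtain ⟨G, i1, i2, hG, hBG, h', h0'⟩ := ih _ hlt {f // f ≠ c} (hF.subtype _) rfl
    exact ⟨G, i1, i2, hG, hBG, h.trans h', by simp [h0, h0']⟩

section Attach

variable {F : Type*} [PartialOrder F]

/-- The forest obtained by adding one maximal edge at the vertex `x` of the realization. -/
def Attach (_ : realization F) : Type _ := Option F

variable (x : realization F)

instance [Fintype F] : Fintype (Attach x) := inferInstanceAs (Fintype (Option F))

/-- The edges of the original forest. -/
def Attach.old (f : F) : Attach x := some f

/-- The additional edge. -/
def Attach.new : Attach x := none

variable {x}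

@[elab_as_elim]
lemma Attach.cases {P : Attach x → Prop} (h1 : ∀ f, P (Attach.old x f)) (h2 : P (Attach.new x))
    (a : Attach x) : P a := Option.rec h2 h1 a

variable (x)

/-- The order relation of the extended forest. -/
def Attach.Rel : Option F → Option F → Prop
  | some a, some b => a ≤ b
  | some a, none => x.1 a = 1
  | none, some _ => False
  | none, none => True

instance : PartialOrder (Attach x) where
  le := Attach.Rel x
  le_refl a := by
    induction a using Attach.cases with
    | h1 f => exact le_refl f
    | h2 => trivial
  le_trans a b c := by
    induction a using Attach.cases with
    | h1 a =>
      induction b using Attach.cases with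
      | h1 b =>
        induction c using Attach.cases with
        | h1 c => exact le_trans (a := a)
        | h2 =>
          intro hab (hb : x.1 b = 1)
          rcases (show a ≤ b from hab).eq_or_lt with h | h
          · exact h ▸ hb
          · exact x.2.1.2 b a (hb ▸ one_pos) h
      | h2 =>
        induction c using Attach.cases with
        | h1 c => exact fun _ h => h.elim
        | h2 => exact fun h _ => h
    | h2 =>
      induction b using Attach.cases with
      | h1 b => exact fun h => h.elim
      | h2 => exact fun _ h => h
  le_antisymm a b := by
    induction a using Attach.cases with
    | h1 a =>
      induction b using Attach.cases with
      | h1 b => exact fun h h' => congrArg some (le_antisymm (α := F) h h')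
      | h2 => exact fun _ h => h.elim
    | h2 =>
      induction b using Attach.cases with
      | h1 b => exact fun h => h.elim
      | h2 => exact fun _ _ => rfl

variable {x}

lemma Attach.old_le_old {a b : F} : Attach.old x a ≤ Attach.old x b ↔ a ≤ b := Iff.rfl

lemma Attach.old_lt_old {a b : F} : Attach.old x a < Attach.old x b ↔ a < b := by
  rw [lt_iff_le_not_ge, lt_iff_le_not_ge, old_le_old, old_le_old]

lemma Attach.old_le_new {a : F} : Attach.old x a ≤ Attach.new x ↔ x.1 a = 1 := Iff.rfl

lemma Attach.old_lt_new {a : F} : Attach.old x a < Attach.new x ↔ x.1 a = 1 :=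
  ⟨fun h => old_le_new.1 h.le, fun h => lt_of_le_not_ge (old_le_new.2 h) fun h => h⟩

lemma Attach.not_new_le_old {a : F} : ¬ Attach.new x ≤ Attach.old x a := fun h => h

lemma isForest_attach (hF : IsForest F) : IsForest (Attach x) := by
  intro a b c
  induction a using Attach.cases with
  | h2 =>
    induction b using Attach.cases with
    | h2 => exact fun _ _ => Or.inl le_rfl
    | h1 b =>
      induction c using Attach.cases with
      | h1 c => exact fun h => absurd h Attach.not_new_le_old
      | h2 => exact fun _ h => Or.inr h
  | h1 a =>
    induction b using Attach.cases with
    | h2 =>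
      induction c using Attach.cases with
      | h1 c => exact fun _ h => absurd h Attach.not_new_le_old
      | h2 => exact fun h _ => Or.inl h
    | h1 b =>
      induction c using Attach.cases with
      | h1 c => exact hF a b c
      | h2 =>
        intro ha hb
        rw [Attach.old_le_new] at ha hb
        exact x.2.2 a b (ha ▸ one_pos) (hb ▸ one_pos)

/-- Restriction of a point of the extended realization. -/
def restrictAttach (y : realization (Attach x)) : realization F :=
  ⟨fun f => y.1 (Attach.old x f), ⟨⟨fun _ => y.2.1.1 _, fun _ _ he hfe =>
    y.2.1.2 _ _ he (Attach.old_lt_old.2 hfe)⟩, fun _ _ he hf => y.2.2 _ _ he hf⟩⟩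

lemma continuous_restrictAttach : Continuous (restrictAttach (x := x)) :=
  Continuous.subtype_mk (continuous_pi fun f =>
    continuous_realization_apply (Attach.old x f)) _

lemma restrictAttach_eq (hx : ∀ e, x.1 e = 0 ∨ x.1 e = 1) {y : realization (Attach x)}
    (hy : 0 < y.1 (Attach.new x)) : restrictAttach y = x := by
  refine Subtype.ext (funext fun f => ?_)
  show y.1 (Attach.old x f) = x.1 f
  rcases hx f with h | h
  · rw [h]
    refine le_antisymm (not_lt.1 fun hpos => ?_) (y.2.1.1 _).1
    rcases y.2.2 _ _ hpos hy with h1 | h1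
    · rw [Attach.old_le_new, h] at h1
      exact zero_ne_one h1
    · exact Attach.not_new_le_old h1
  · rw [h]
    exact y.2.1.2 _ _ hy (Attach.old_lt_new.2 h)

/-- A point of the extended realization. -/
def extendAttach (x : realization F) (z : F → ℝ) (t : ℝ) : Attach x → ℝ
  | some f => z f
  | none => t

@[simp] lemma extendAttach_old (z : F → ℝ) (t : ℝ) (f : F) :
    extendAttach x z t (Attach.old x f) = z f := rfl

lemma extendAttach_mem (hx : ∀ e, x.1 e = 0 ∨ x.1 e = 1) {z : F → ℝ} {t : ℝ}
    (hz : z ∈ realization F) (ht : t ∈ Icc (0 : ℝ) 1) (h : t = 0 ∨ z = x.1) :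
    extendAttach x z t ∈ realization (Attach x) := by
  have hcomp : ∀ f, 0 < z f → 0 < t → Attach.old x f ≤ Attach.new x := by
    intro f hf ht
    have hzx := h.resolve_left ht.ne'
    rw [hzx] at hf
    exact (hx f).resolve_left hf.ne'
  refine ⟨⟨fun a => ?_, fun a b => ?_⟩, fun a b => ?_⟩
  · induction a using Attach.cases with
    | h1 f => exact hz.1.1 f
    | h2 => exact ht
  · induction a using Attach.cases with
    | h1 a =>
      induction b using Attach.cases with
      | h1 b => exact fun h1 h2 => hz.1.2 a b h1 (Attach.old_lt_old.1 h2)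
      | h2 => exact fun _ h => absurd h.le Attach.not_new_le_old
    | h2 =>
      induction b using Attach.cases with
      | h1 b =>
        intro h1 h2
        have hzx := h.resolve_left (ne_of_gt h1)
        rw [extendAttach_old, hzx]
        exact Attach.old_lt_new.1 h2
      | h2 => exact fun _ h => absurd h (lt_irrefl _)
  · induction a using Attach.cases with
    | h1 a =>
      induction b using Attach.cases with
      | h1 b => exact hz.2 a b
      | h2 => exact fun h1 h2 => Or.inl (hcomp a h1 h2)
    | h2 =>
      induction b using Attach.cases with
      | h1 b => exact fun h1 h2 => Or.inr (hcomp b h2 h1)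
      | h2 => exact fun _ _ => Or.inl le_rfl

end Attach

section Path

variable {X : Type*} {α β γ : ℝ → X}

/-- Concatenation of two paths. -/
noncomputable def concatPath (α β : ℝ → X) (t : ℝ) : X :=
  if t ≤ 1 / 2 then α (2 * t) else β (2 * t - 1)

lemma concatPath_zero : concatPath α β 0 = α 0 := by simp [concatPath]

lemma concatPath_one : concatPath α β 1 = β 1 := by norm_num [concatPath]

lemma concatPath_mem (t : ℝ) (ht : t ∈ Icc (0 : ℝ) 1) :
    concatPath α β t ∈ α '' Icc 0 1 ∪ β '' Icc 0 1 := by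
  unfold concatPath
  split_ifs with h
  · exact Or.inl ⟨2 * t, ⟨by linarith [ht.1], by linarith⟩, rfl⟩
  · exact Or.inr ⟨2 * t - 1, ⟨by linarith, by linarith [ht.2]⟩, rfl⟩

lemma injOn_concatPath (hα : InjOn α (Icc 0 1)) (hβ : InjOn β (Icc 0 1)) {J : Set ℝ}
    (hJ : J ⊆ Icc 0 1)
    (h : ∀ s ∈ Icc (0 : ℝ) 1, ∀ t ∈ Ioc (0 : ℝ) 1, (t + 1) / 2 ∈ J → α s ≠ β t) :
    InjOn (concatPath α β) J := by
  have key : ∀ s ∈ J, ∀ t ∈ J, s ≤ 1 / 2 → ¬ t ≤ 1 / 2 → α (2 * s) ≠ β (2 * t - 1) := by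
    intro s hs t ht hs2 ht2
    have h1 := hJ hs
    have h2 := hJ ht
    refine h _ ⟨?_, ?_⟩ _ ⟨?_, ?_⟩ ?_ <;> try linarith [h1.1, h2.2]
    convert ht using 1
    ring
  intro s hs t ht hst
  have h1 := hJ hs
  have h2 := hJ ht
  unfold concatPath at hst
  split_ifs at hst with hs2 ht2 ht2
  · have := hα ⟨by linarith [h1.1], by linarith⟩ ⟨by linarith [h2.1], by linarith⟩ hst
    linarith
  · exact absurd hst (key s hs t ht hs2 ht2)
  · exact absurd hst.symm (key t ht s hs ht2 hs2)
  · have := hβ ⟨by linarith, by linarith [h1.2]⟩ ⟨by linarith, by linarith [h2.2]⟩ hst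
    linarith

variable [TopologicalSpace X]

/-- An injective path, parametrized by the unit interval. -/
def IsInjPath (γ : ℝ → X) : Prop := ContinuousOn γ (Icc 0 1) ∧ InjOn γ (Icc 0 1)

lemma IsInjPath.comp_affine (h : IsInjPath γ) {a b : ℝ} (ha : a ∈ Icc (0 : ℝ) 1)
    (hb : b ∈ Icc (0 : ℝ) 1) (hab : a ≠ b) : IsInjPath fun t => γ (a + t * (b - a)) := by
  have hm : MapsTo (fun t => a + t * (b - a)) (Icc 0 1) (Icc (0 : ℝ) 1) := by
    intro t ht
    have := (convex_Icc (0 : ℝ) 1).add_smul_sub_mem ha hb ht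
    simpa using this
  refine ⟨h.1.comp (by fun_prop) hm, fun s hs t ht hst => ?_⟩
  have := h.2 (hm hs) (hm ht) hst
  have h1 : (s - t) * (b - a) = 0 := by linarith
  rcases mul_eq_zero.1 h1 with h2 | h2
  · linarith
  · exact absurd (by linarith) hab

lemma IsInjPath.reverse (h : IsInjPath γ) : IsInjPath fun t => γ (1 - t) := by
  have := h.comp_affine (a := 1) (b := 0) (by simp) (by simp) one_ne_zero
  convert this using 3
  ring

lemma continuousOn_concatPath (hα : ContinuousOn α (Icc 0 1)) (hβ : ContinuousOn β (Icc 0 1))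
    (h : α 1 = β 0) : ContinuousOn (concatPath α β) (Icc 0 1) := by
  have hu : Icc (0 : ℝ) 1 = Icc 0 (1 / 2) ∪ Icc (1 / 2) 1 :=
    (Icc_union_Icc_eq_Icc (by norm_num) (by norm_num)).symm
  rw [hu]
  refine ContinuousOn.union_of_isClosed ?_ ?_ isClosed_Icc isClosed_Icc
  · refine ContinuousOn.congr (f := fun t => α (2 * t)) ?_ fun t ht => if_pos ht.2
    refine hα.comp (by fun_prop) fun t ht => ⟨?_, ?_⟩ <;> linarith [ht.1, ht.2]
  · refine ContinuousOn.congr (f := fun t => β (2 * t - 1)) ?_ fun t ht => ?_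
    · refine hβ.comp (by fun_prop) fun t ht => ⟨?_, ?_⟩ <;> linarith [ht.1, ht.2]
    · rcases ht.1.eq_or_lt with h1 | h1
      · rw [← h1]
        norm_num [concatPath, h]
      · exact if_neg (not_le.2 h1)

end Path

section Arc

variable {X : Type u} [TopologicalSpace X] {α β : ℝ → X}

lemma exists_isSimpleClosedCurve [T2Space X] {γ : ℝ → X} (hc : ContinuousOn γ (Icc 0 1))
    (hi : InjOn γ (Ico 0 1)) (h : γ 0 = γ 1) : ∃ S : Set X, IsSimpleClosedCurve S := by
  have : Fact ((0 : ℝ) < 1) := ⟨one_pos⟩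
  let f : AddCircle (1 : ℝ) → X := AddCircle.liftIco 1 0 γ
  have hcoe : ∀ t ∈ Ico (0 : ℝ) 1, f t = γ t := fun t ht =>
    AddCircle.liftIco_zero_coe_apply ht
  have hf : Continuous f := AddCircle.liftIco_zero_continuous h hc
  have hinj : Function.Injective f := by
    intro a b hab
    obtain ⟨s, hs, rfl⟩ := AddCircle.eq_coe_Ico a
    obtain ⟨t, ht, rfl⟩ := AddCircle.eq_coe_Ico b
    rw [hcoe s hs, hcoe t ht] at hab
    rw [hi hs ht hab]
  refine ⟨range f, ⟨?_⟩⟩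
  have e : AddCircle (1 : ℝ) ≃ₜ range f :=
    (hf.isClosedEmbedding hinj).isEmbedding.toHomeomorph
  exact e.symm.trans (AddCircle.homeomorphCircle one_ne_zero)

lemma exists_isSimpleClosedCurve_of_paths [T2Space X] (hα : IsInjPath α) (hβ : IsInjPath β)
    (h1 : α 1 = β 0) (h2 : β 1 = α 0)
    (h : ∀ s ∈ Ioo (0 : ℝ) 1, α s ∉ β '' Icc 0 1) : ∃ S : Set X, IsSimpleClosedCurve S := by
  refine exists_isSimpleClosedCurve (continuousOn_concatPath hα.1 hβ.1 h1)
    (injOn_concatPath hα.2 hβ.2 Ico_subset_Icc_self fun s hs t ht htJ hst => ?_)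
    (by rw [concatPath_zero, concatPath_one, h2])
  have ht' : t ∈ Icc (0 : ℝ) 1 := ⟨ht.1.le, ht.2⟩
  rcases hs.1.eq_or_lt with h0 | h0
  · rw [← h0, ← h2] at hst
    have := hβ.2 (by simp) ht' hst
    linarith [htJ.2]
  rcases hs.2.eq_or_lt with h3 | h3
  · rw [h3, h1] at hst
    have := hβ.2 (by simp) ht' hst
    exact ht.1.ne this
  · exact h s ⟨h0, h3⟩ ⟨t, ht', hst.symm⟩

lemma homeomorph_unitInterval_zero (φ : Icc (0 : ℝ) 1 ≃ₜ Icc (0 : ℝ) 1) :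
    φ 0 = 0 ∨ φ 0 = 1 := by
  rcases φ.continuous.strictMono_of_inj_boundedOrder' φ.injective with h | h
  · obtain ⟨t, ht⟩ := φ.surjective 0
    exact Or.inl (le_antisymm ((h.monotone (show 0 ≤ t from t.2.1)).trans_eq ht) (φ 0).2.1)
  · obtain ⟨t, ht⟩ := φ.surjective 1
    exact Or.inr (le_antisymm (φ 0).2.2 (ht.symm.trans_le (h.antitone (show 0 ≤ t from t.2.1))))

/-- An arc is the image of an injective path. -/
lemma exists_isInjPath {A : Set X} (h : Icc (0 : ℝ) 1 ≃ₜ A) :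
    ∃ γ : ℝ → X, IsInjPath γ ∧ γ '' Icc 0 1 = A ∧ γ 0 = h 0 ∧
      ∀ x, IsArcEndpoint A x → x = γ 0 ∨ x = γ 1 := by
  have hγ : ∀ t : Icc (0 : ℝ) 1, h (projIcc 0 1 zero_le_one t.1) = h t := fun t => by
    rw [projIcc_val]
  refine ⟨fun t => h (projIcc 0 1 zero_le_one t), ⟨?_, ?_⟩, ?_, ?_, ?_⟩
  · exact (continuous_subtype_val.comp (h.continuous.comp continuous_projIcc)).continuousOn
  · intro s hs t ht hst
    have := h.injective (Subtype.ext hst)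
    rw [projIcc_of_mem zero_le_one hs, projIcc_of_mem zero_le_one ht] at this
    exact congrArg Subtype.val this
  · ext x
    constructor
    · rintro ⟨t, -, rfl⟩
      exact (h _).2
    · intro hx
      obtain ⟨t, ht⟩ := h.surjective ⟨x, hx⟩
      exact ⟨t.1, t.2, by dsimp only; rw [hγ, ht]⟩
  · exact congrArg Subtype.val (hγ 0)
  · rintro x ⟨_, g, hg, -⟩
    have hx : x = h ((g.trans h.symm) 0) := by
      rw [← hg]
      exact congrArg Subtype.val (h.apply_symm_apply _).symm
    rw [hx]
    rcases homeomorph_unitInterval_zero (g.trans h.symm) with h0 | h0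
    · exact Or.inl (by rw [h0]; exact congrArg Subtype.val (hγ 0).symm)
    · exact Or.inr (by rw [h0]; exact congrArg Subtype.val (hγ 1).symm)

end Arc

section Model

variable {X : Type*} [TopologicalSpace X]

/-- `S` is the image of the realization of a forest with root `p`, in which the elements of `V`
correspond to vertices. -/
def IsModel (S : Set X) (p : X) (V : Set X) : Prop :=
  (∃ (F : Type) (_ : Fintype F) (_ : PartialOrder F), IsForest F ∧
    ∃ ψ : realization F → X, Continuous ψ ∧ Function.Injective ψ ∧ range ψ = S ∧ ψ 0 = p ∧
      ∀ v ∈ V, ∃ x, ψ x = v ∧ ∀ e, x.1 e = 0 ∨ x.1 e = 1) ∧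
  ∀ v ∈ V, ∀ w ∈ V, v ≠ w → ∃ γ, IsInjPath γ ∧ γ 0 = v ∧ γ 1 = w ∧ γ '' Icc 0 1 ⊆ S

variable {S V : Set X} {p : X} {γ : ℝ → X}

lemma IsModel.subset (h : IsModel S p V) : V ⊆ S := by
  obtain ⟨⟨F, _, _, -, ψ, -, -, rfl, -, hV⟩, -⟩ := h
  intro v hv
  obtain ⟨x, rfl, -⟩ := hV v hv
  exact mem_range_self x

lemma isModel_singleton (p : X) : IsModel {p} p {p} := by
  refine ⟨⟨Empty, inferInstance, inferInstance, fun a => a.elim, fun _ => p, continuous_const,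
    fun x y _ => Subtype.ext (funext fun e => e.elim), range_const, rfl,
    fun v hv => ⟨0, (mem_singleton_iff.1 hv).symm, fun e => e.elim⟩⟩, ?_⟩
  rintro v rfl w rfl h
  exact absurd rfl h

lemma IsModel.attach (h : IsModel S p V) (hγ : IsInjPath γ) (h0 : γ 0 ∈ V)
    (hS : ∀ t ∈ Ioc (0 : ℝ) 1, γ t ∉ S) :
    IsModel (S ∪ γ '' Icc 0 1) p (insert (γ 1) V) := by
  classical
  have hVS := h.subset
  obtain ⟨⟨F, _, _, hF, ψ, hψ, hinj, rfl, rfl, hV⟩, hpath⟩ := h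
  have hpath' : ∀ u ∈ V, ∃ α, IsInjPath α ∧ α 0 = u ∧ α 1 = γ 1 ∧
      α '' Icc 0 1 ⊆ range ψ ∪ γ '' Icc 0 1 := by
    intro u hu
    by_cases huv : u = γ 0
    · exact ⟨γ, hγ, huv.symm, rfl, subset_union_right⟩
    obtain ⟨α, hα, hα0, hα1, hαS⟩ := hpath u hu _ h0 huv
    refine ⟨concatPath α γ, ⟨continuousOn_concatPath hα.1 hγ.1 hα1,
      injOn_concatPath hα.2 hγ.2 subset_rfl fun s hs t ht _ hst =>
        hS t ht (hst ▸ hαS (mem_image_of_mem α hs))⟩, ?_, ?_, ?_⟩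
    · rw [concatPath_zero, hα0]
    · rw [concatPath_one]
    · rintro _ ⟨t, ht, rfl⟩
      exact union_subset_union_left _ hαS (concatPath_mem t ht)
  refine ⟨?_, ?_⟩
  swap
  · rintro v (rfl | hv) w (rfl | hw) hvw
    · exact absurd rfl hvw
    · obtain ⟨α, hα, hα0, hα1, hαS⟩ := hpath' w hw
      refine ⟨_, hα.reverse, by simpa using hα1, by simpa using hα0, ?_⟩
      rintro _ ⟨t, ht, rfl⟩
      exact hαS ⟨1 - t, ⟨by linarith [ht.2], by linarith [ht.1]⟩, rfl⟩
    · exact hpath' v hv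
    · obtain ⟨α, hα, hα0, hα1, hαS⟩ := hpath v hv w hw hvw
      exact ⟨α, hα, hα0, hα1, hαS.trans subset_union_left⟩
  obtain ⟨x, hxv, hx⟩ := hV _ h0
  have hnew : ∀ y : realization (Attach x), y.1 (Attach.new x) ≠ 0 →
      y.1 (Attach.new x) ∈ Ioc (0 : ℝ) 1 := fun y hy =>
    ⟨lt_of_le_of_ne (y.2.1.1 _).1 hy.symm, (y.2.1.1 _).2⟩
  let ψ' : realization (Attach x) → X := fun y =>
    if y.1 (Attach.new x) = 0 then ψ (restrictAttach y) else γ (y.1 (Attach.new x))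
  have hold : ∀ y, y.1 (Attach.new x) = 0 → ψ' y = ψ (restrictAttach y) := fun y hy => if_pos hy
  have hnew' : ∀ y, y.1 (Attach.new x) ≠ 0 → ψ' y = γ (y.1 (Attach.new x)) :=
    fun y hy => if_neg hy
  have hmem0 : ∀ z : realization F, extendAttach x z.1 0 ∈ realization (Attach x) := fun z =>
    extendAttach_mem hx z.2 (by simp) (Or.inl rfl)
  have hmem : ∀ t ∈ Icc (0 : ℝ) 1, extendAttach x x.1 t ∈ realization (Attach x) := fun t ht =>
    extendAttach_mem hx x.2 ht (Or.inr rfl)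
  have hext0 : ∀ z, ψ' ⟨_, hmem0 z⟩ = ψ z := fun z => hold _ rfl
  have hext : ∀ t (ht : t ∈ Icc (0 : ℝ) 1), ψ' ⟨_, hmem t ht⟩ = γ t := by
    intro t ht
    by_cases h : t = 0
    · subst h
      exact (hext0 x).trans hxv
    · exact hnew' _ h
  refine ⟨Attach x, inferInstance, inferInstance, isForest_attach hF, ψ', ?_, ?_, ?_, ?_, ?_⟩
  · have hc := continuous_realization_apply (Attach.new x)
    rw [← continuousOn_univ]
    have hu : (univ : Set (realization (Attach x))) =
        {y | y.1 (Attach.new x) = 0} ∪ {y | restrictAttach y = x} := by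
      refine (eq_univ_of_forall fun y => ?_).symm
      by_cases hy : y.1 (Attach.new x) = 0
      · exact Or.inl hy
      · exact Or.inr (restrictAttach_eq hx (hnew y hy).1)
    rw [hu]
    refine ContinuousOn.union_of_isClosed ?_ ?_ (isClosed_eq hc continuous_const)
      (isClosed_eq continuous_restrictAttach continuous_const)
    · exact (hψ.comp continuous_restrictAttach).continuousOn.congr hold
    · refine (hγ.1.comp hc.continuousOn fun y _ => y.2.1.1 _).congr fun y hy => ?_
      by_cases h : y.1 (Attach.new x) = 0
      · rw [hold y h, show restrictAttach y = x from hy, hxv, Function.comp_apply, h]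
      · exact hnew' y h
  · intro y z hyz
    have hall : y.1 (Attach.new x) = z.1 (Attach.new x) ∧
        restrictAttach y = restrictAttach z := by
      by_cases h1 : y.1 (Attach.new x) = 0 <;> by_cases h2 : z.1 (Attach.new x) = 0
      · rw [hold y h1, hold z h2] at hyz
        exact ⟨h1.trans h2.symm, hinj hyz⟩
      · rw [hold y h1, hnew' z h2] at hyz
        exact absurd ⟨_, hyz⟩ (hS _ (hnew z h2))
      · rw [hnew' y h1, hold z h2] at hyz
        exact absurd ⟨_, hyz.symm⟩ (hS _ (hnew y h1))
      · rw [hnew' y h1, hnew' z h2] at hyz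
        exact ⟨hγ.2 (y.2.1.1 _) (z.2.1.1 _) hyz,
          (restrictAttach_eq hx (hnew y h1).1).trans (restrictAttach_eq hx (hnew z h2).1).symm⟩
    refine Subtype.ext (funext fun a => ?_)
    induction a using Attach.cases with
    | h1 f => exact congrFun (congrArg Subtype.val hall.2) f
    | h2 => exact hall.1
  · refine subset_antisymm ?_ (union_subset ?_ ?_)
    · rintro _ ⟨y, rfl⟩
      by_cases h : y.1 (Attach.new x) = 0
      · exact Or.inl (hold y h ▸ mem_range_self _)
      · exact Or.inr (hnew' y h ▸ mem_image_of_mem γ (y.2.1.1 _))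
    · rintro _ ⟨z, rfl⟩
      exact ⟨_, hext0 z⟩
    · rintro _ ⟨t, ht, rfl⟩
      exact ⟨_, hext t ht⟩
  · exact hold 0 rfl
  · rintro v (rfl | hv)
    · refine ⟨_, hext 1 (by simp), fun a => ?_⟩
      induction a using Attach.cases with
      | h1 f => exact hx f
      | h2 => exact Or.inr rfl
    · obtain ⟨z, rfl, hz⟩ := hV v hv
      refine ⟨_, hext0 z, fun a => ?_⟩
      induction a using Attach.cases with
      | h1 f => exact hz f
      | h2 => exact Or.inl rfl

lemma IsModel.attach_uIcc (h : IsModel S p V) (hγ : IsInjPath γ) {a b : ℝ}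
    (ha : a ∈ Icc (0 : ℝ) 1) (hb : b ∈ Icc (0 : ℝ) 1) (hv : γ a ∈ V)
    (hS : ∀ t ∈ uIcc a b, γ t ∈ S → t = a) :
    IsModel (S ∪ γ '' uIcc a b) p (insert (γ b) V) := by
  by_cases hab : a = b
  · subst hab
    rw [uIcc_self, image_singleton, insert_eq_of_mem hv,
      union_eq_left.2 (singleton_subset_iff.2 (h.subset hv))]
    exact h
  have himg : (fun t => a + t * (b - a)) '' Icc 0 1 = uIcc a b := by
    rw [← segment_eq_uIcc, segment_eq_image']
    simp
  have h1 := h.attach (hγ.comp_affine ha hb hab) (by simpa using hv) fun t ht htS => by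
    have h2 := hS _ (himg ▸ mem_image_of_mem _ ⟨ht.1.le, ht.2⟩) htS
    have h3 : t * (b - a) = 0 := by linarith
    rcases mul_eq_zero.1 h3 with h3 | h3
    · exact ht.1.ne' h3
    · exact hab (by linarith)
  have h2 : (fun t => γ (a + t * (b - a))) '' Icc 0 1 = γ '' uIcc a b := by
    rw [← himg, image_image]
  rw [h2] at h1
  simpa using h1

/-- An arc is the realization of a forest, with any of its points as the root. -/
lemma isModel_image (hγ : IsInjPath γ) {s : ℝ} (hs : s ∈ Icc (0 : ℝ) 1) :
    IsModel (γ '' Icc 0 1) (γ s) {γ 1, γ 0, γ s} := by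
  have h0 : uIcc s 0 = Icc 0 s := uIcc_of_ge hs.1
  have h1 : uIcc s 1 = Icc s 1 := uIcc_of_le hs.2
  have hsub0 : Icc 0 s ⊆ Icc (0 : ℝ) 1 := Icc_subset_Icc_right hs.2
  have hsub1 : Icc s 1 ⊆ Icc (0 : ℝ) 1 := Icc_subset_Icc_left hs.1
  have m1 := (isModel_singleton (γ s)).attach_uIcc hγ hs (b := 0) (by simp) rfl
    fun t ht h => hγ.2 (hsub0 (h0 ▸ ht)) hs h
  have m2 := m1.attach_uIcc hγ hs (b := 1) (by simp) (by simp) fun t ht h => by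
    rw [h1] at ht
    rw [h0] at h
    rcases h with h | ⟨u, hu, h⟩
    · exact hγ.2 (hsub1 ht) hs h
    · exact le_antisymm (hγ.2 (hsub0 hu) (hsub1 ht) h ▸ hu.2) ht.1
  rw [h0, h1] at m2
  rwa [union_eq_right.2 (singleton_subset_iff.2 (mem_image_of_mem γ (right_mem_Icc.2 hs.1))),
    ← image_union, Icc_union_Icc_eq_Icc hs.1 hs.2] at m2

end Model

section Tree

variable {X : Type u} [MetricSpace X]

lemma IsTree.exists_isModel (hX : IsTree X) (p : X) : ∃ V, IsModel univ p V := by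
  classical
  obtain ⟨⟨_, _, -, 𝒜, harc, hcover, hmeet⟩, hcurve⟩ := hX
  have hclosed : ∀ A ∈ 𝒜, IsClosed A := by
    intro A hA
    obtain ⟨h⟩ := harc A hA
    have : CompactSpace A := h.symm.compactSpace
    exact (isCompact_iff_compactSpace.2 this).isClosed
  let good : Finset (Set X) → Prop := fun 𝓑 => 𝓑 ⊆ 𝒜 ∧ 𝓑.Nonempty ∧
    ∃ V, IsModel (⋃₀ (𝓑 : Set (Set X))) p V ∧ ∀ B ∈ 𝓑, ∀ x, IsArcEndpoint B x → x ∈ V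
  have hstart : ∃ 𝓑, good 𝓑 := by
    obtain ⟨A, hA, hpA⟩ := mem_sUnion.1 (hcover ▸ mem_univ p)
    obtain ⟨h⟩ := harc A hA
    obtain ⟨γ, hγ, himg, -, hend⟩ := exists_isInjPath h.symm
    obtain ⟨s, hs, rfl⟩ := himg ▸ hpA
    refine ⟨{A}, Finset.singleton_subset_iff.2 hA, Finset.singleton_nonempty A,
      {γ 1, γ 0, γ s}, ?_, ?_⟩
    · rw [Finset.coe_singleton, sUnion_singleton, ← himg]
      exact isModel_image hγ hs
    · intro B hB x hx
      rw [Finset.mem_singleton.1 hB] at hx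
      rcases hend x hx with h | h <;> simp [h]
  have hfin : {𝓑 | good 𝓑}.Finite :=
    (𝒜.powerset.finite_toSet).subset fun 𝓑 h => Finset.mem_powerset.2 h.1
  obtain ⟨𝓑, hmax⟩ := hfin.exists_maximal hstart
  obtain ⟨hsub, hne, V, hV, hVend⟩ := hmax.prop
  have hall : 𝓑 = 𝒜 := by
    by_contra hneq
    have hdiff : (𝒜 \ 𝓑).Nonempty := Finset.sdiff_nonempty.2 fun h => hneq (hsub.antisymm h)
    have hnonempty : ∀ A ∈ 𝒜, A.Nonempty := fun A hA => by
      obtain ⟨h⟩ := harc A hA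
      exact ⟨_, (h.symm 0).2⟩
    have hcl : ∀ 𝒟 ⊆ 𝒜, IsClosed (⋃₀ (𝒟 : Set (Set X))) := fun 𝒟 h𝒟 => by
      rw [sUnion_eq_biUnion]
      exact 𝒟.finite_toSet.isClosed_biUnion fun A hA => hclosed A (h𝒟 hA)
    obtain ⟨x, -, hx1, hx2⟩ := isPreconnected_closed_iff.1 (isPreconnected_univ (α := X)) _ _
      (hcl 𝓑 hsub) (hcl (𝒜 \ 𝓑) Finset.sdiff_subset)
      (by
        rw [← sUnion_union, ← Finset.coe_union, Finset.union_sdiff_of_subset hsub, hcover])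
      (by
        obtain ⟨B, hB⟩ := hne
        obtain ⟨y, hy⟩ := hnonempty B (hsub hB)
        exact ⟨y, mem_univ y, B, hB, hy⟩)
      (by
        obtain ⟨A, hA⟩ := hdiff
        obtain ⟨y, hy⟩ := hnonempty A (Finset.mem_sdiff.1 hA).1
        exact ⟨y, mem_univ y, A, hA, hy⟩)
    obtain ⟨A, hA, hxA⟩ := hx2
    obtain ⟨hA1, hA2⟩ := Finset.mem_sdiff.1 hA
    have hcommon : ∀ y ∈ A, y ∈ ⋃₀ (𝓑 : Set (Set X)) → IsArcEndpoint A y ∧ y ∈ V := by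
      rintro y hy ⟨B, hB, hyB⟩
      have := hmeet A hA1 B (hsub hB) (fun h => hA2 (h ▸ hB)) y ⟨hy, hyB⟩
      exact ⟨this.1, hVend B hB y this.2⟩
    obtain ⟨⟨_, h, h0, -⟩, hxV⟩ := hcommon x hxA hx1
    obtain ⟨γ, hγ, himg, hγ0, hend⟩ := exists_isInjPath h
    have hγx : γ 0 = x := hγ0.trans h0
    have hzero : (0 : ℝ) ∈ Icc (0 : ℝ) 1 := by simp
    have hone : (1 : ℝ) ∈ Icc (0 : ℝ) 1 := by simp
    have hinter : ∀ t ∈ Icc (0 : ℝ) 1, γ t ∈ ⋃₀ (𝓑 : Set (Set X)) → t = 0 ∨ t = 1 := by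
      intro t ht htB
      exact (hend _ (hcommon _ (himg ▸ mem_image_of_mem γ ht) htB).1).imp
        (fun h => hγ.2 ht hzero h) fun h => hγ.2 ht hone h
    by_cases h1 : γ 1 ∈ ⋃₀ (𝓑 : Set (Set X))
    · obtain ⟨β, hβ, hβ0, hβ1, hβS⟩ := hV.2 _ (hcommon _ (himg ▸ mem_image_of_mem γ hone) h1).2
        x hxV fun h => one_ne_zero (hγ.2 hone hzero (h.trans hγx.symm))
      obtain ⟨S, hS⟩ := exists_isSimpleClosedCurve_of_paths hγ hβ hβ0.symm (hβ1.trans hγx.symm)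
        fun s hs hsβ => by
          rcases hinter s ⟨hs.1.le, hs.2.le⟩ (hβS hsβ) with h | h
          · exact hs.1.ne' h
          · exact hs.2.ne h
      exact hcurve S hS
    · have hnew := hV.attach hγ (hγx ▸ hxV) fun t ht htB => by
        rcases hinter t ⟨ht.1.le, ht.2⟩ htB with h | h
        · exact ht.1.ne' h
        · exact h1 (h ▸ htB)
      have hgood : good (insert A 𝓑) := by
        refine ⟨Finset.insert_subset hA1 hsub, Finset.insert_nonempty _ _,
          insert (γ 1) V, ?_, ?_⟩
        · rw [Finset.coe_insert, sUnion_insert, union_comm, ← himg]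
          exact hnew
        · intro B hB y hy
          rcases Finset.mem_insert.1 hB with rfl | hB
          · rcases hend y hy with h | h
            · exact Or.inr (h ▸ hγx ▸ hxV)
            · exact Or.inl h
          · exact Or.inr (hVend B hB y hy)
      exact hA2 (hmax.le_of_ge hgood (Finset.subset_insert _ _) (Finset.mem_insert_self _ _))
  rw [hall, hcover] at hV
  exact ⟨V, hV⟩

/-- Every tree is the realization of a branching forest, with any of its points as the root. -/
lemma IsTree.exists_realization (hX : IsTree X) (p : X) :
    ∃ (F : Type) (_ : Fintype F) (_ : PartialOrder F), IsForest F ∧ IsBranching F ∧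
      ∃ ψ : realization F ≃ₜ X, ψ 0 = p := by
  obtain ⟨V, ⟨F, _, _, hF, ψ, hψ, hinj, hran, h0, -⟩, -⟩ := hX.exists_isModel p
  obtain ⟨G, _, _, hG, hBG, h, hh0⟩ := exists_isBranching F hF
  let e : realization F ≃ₜ X := Continuous.homeoOfEquivCompactToT2
    (f := Equiv.ofBijective ψ ⟨hinj, range_eq_univ.1 hran⟩) hψ
  refine ⟨G, inferInstance, inferInstance, hG, hBG, h.symm.trans e, ?_⟩
  rw [← hh0, Homeomorph.trans_apply, h.symm_apply_apply]
  exact h0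

end Tree

theorem statement18 {X : Type u} [MetricSpace X] (hX : IsTree X)
    (p : X) (hp : p ∈ ordinaryIn (univ : Set X) ∪ endPtsIn (univ : Set X)) :
    UniqueHyperspaceInTrees X p := by
  rintro Y _ hY q ⟨h⟩
  obtain ⟨F, _, _, hF, hBF, ψ, rfl⟩ := hX.exists_realization p
  obtain ⟨G, _, _, hG, hBG, ψ', rfl⟩ := hY.exists_realization q
  obtain ⟨k⟩ := nonempty_homeomorph_CP hF ψ
  obtain ⟨k'⟩ := nonempty_homeomorph_CP hG ψ'
  obtain ⟨φ⟩ := exists_orderIso_of_homeomorph hF hBF hG hBG ((k.trans h).trans k'.symm)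
  refine ⟨(ψ.symm.trans (realizationCongr φ)).trans ψ', ?_⟩
  simp [realizationCongr_zero]
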